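/- arXiv:1003.2699 — 2 statements merged into one kernel-verified Lean document; each statement's English description precedes it below -/
import Mathlib

section
/- (Corollary C, sine version) Let μ ≥ 1 be an odd integer, j ∈ ℕ, and ϑ, φ ∈ [0,π] with cos ϑ + cos φ > 0. Set a = sin ϑ/(cos ϑ + cos φ) and b = sin φ/(cos ϑ + cos φ). Then ∫₀^∞ L_j^μ(2x) J̃_{μ/2}(ax) sin(bx) x^μ e^{−x} dx = (−1)^j · (2^μ/√π) · ((cos ϑ + cos φ)/2)^{(μ+1)/2} · sin((j+(μ+1)/2)φ) · C̃_j^{(μ+1)/2}(cos ϑ). -/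
open MeasureTheory Real Filter Set Metric

noncomputable section

/-- Normalized Bessel function of the first kind: `J̃_α(x) = (x/2)^{-α} J_α(x)`,
given by its (entire) power series. -/
def besselJt (α x : ℝ) : ℝ :=
  ∑' m : ℕ, (-1) ^ m / (m.factorial * Real.Gamma (m + α + 1)) * (x / 2) ^ (2 * m)

/-- Bessel function of the first kind `J_α`. -/
def besselJ (α x : ℝ) : ℝ :=
  ∑' m : ℕ, (-1) ^ m / (m.factorial * Real.Gamma (m + α + 1)) * (x / 2) ^ (2 * (m : ℝ) + α)

/-- Normalized modified Bessel function `Ĩ_α(x) = (x/2)^{-α} I_α(x)`,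
given by its (entire, even) power series. -/
def besselIt (α x : ℝ) : ℝ :=
  ∑' m : ℕ, (x / 2) ^ (2 * m) / (m.factorial * Real.Gamma (m + α + 1))

/-- Modified Bessel function of the first kind `I_α`. -/
def besselI (α x : ℝ) : ℝ :=
  ∑' m : ℕ, (x / 2) ^ (2 * (m : ℝ) + α) / (m.factorial * Real.Gamma (m + α + 1))

/-- Modified Bessel function of the second kind,
`K_α(x) = lim_{β→α} (π/2)(I_{−β}(x) − I_β(x))/sin(βπ)`. -/
def besselK (α x : ℝ) : ℝ :=
  limUnder (nhdsWithin α {α}ᶜ) fun β =>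
    Real.pi / 2 * (besselI (-β) x - besselI β x) / Real.sin (β * Real.pi)

/-- Normalized K-Bessel function `K̃_α(x) = (x/2)^{-α} K_α(x)`. -/
def besselKt (α x : ℝ) : ℝ := (x / 2) ^ (-α) * besselK α x

/-- Normalized Gegenbauer polynomial `C̃_n^λ = Γ(λ) C_n^λ`, where `C_n^λ` is defined via the
generating function `(1 − 2xt + t²)^{−λ} = Σ_{n≥0} C_n^λ(x) tⁿ`; explicitly,
`C̃_n^λ(x) = Σ_{k=0}^{⌊n/2⌋} (−1)^k Γ(λ+n−k)/(k!(n−2k)!) (2x)^{n−2k}`.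
This expression also gives the limit value `C̃_n^0 = lim_{λ→0+} Γ(λ) C_n^λ` for `n ≥ 1`. -/
def gegenbauerCt (n : ℕ) (l x : ℝ) : ℝ :=
  ∑ k ∈ Finset.range (n / 2 + 1),
    (-1) ^ k * Real.Gamma (l + n - k) / (k.factorial * (n - 2 * k).factorial)
      * (2 * x) ^ (n - 2 * k)

/-- Laguerre polynomial `L_n^μ(x) = Σ_{k=0}^n (−1)^k binom(n+μ, n−k) x^k/k!`
(with nonnegative integer parameter `μ`). -/
def laguerreL (n μ : ℕ) (x : ℝ) : ℝ :=
  ∑ k ∈ Finset.range (n + 1),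
    (-1) ^ k * (Nat.choose (n + μ) (n - k)) * x ^ k / k.factorial

/-- The Euler operator `θ = x d/dx`. -/
def eulerOp (u : ℝ → ℝ) : ℝ → ℝ := fun x => x * deriv u x

/-- `(θ+c)(θ+c+ν)u − x² u`, i.e. the operator `Q_ν(θ+c)` applied to `u`. -/
def besselQ (ν c : ℝ) (u : ℝ → ℝ) : ℝ → ℝ := fun x =>
  eulerOp (fun y => eulerOp u y + (c + ν) * u y) x
    + c * (eulerOp u x + (c + ν) * u x) - x ^ 2 * u x

/-- The fourth order differential operator
`D_{μ,ν} = x^{−2}((θ+μ)(θ+μ+ν) − x²)(θ(θ+ν) − x²)`. -/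
def Dop (μ ν : ℝ) (u : ℝ → ℝ) : ℝ → ℝ := fun x =>
  besselQ ν μ (besselQ ν 0 u) x / x ^ 2

/-- The generating function
`G^{μ,ν}(t,x) = (1−t)^{−(μ+ν+2)/2} Ĩ_{μ/2}(tx/(1−t)) K̃_{ν/2}(x/(1−t))`. -/
def genFun (μ ν t x : ℝ) : ℝ :=
  (1 - t) ^ (-(μ + ν + 2) / 2) * besselIt (μ / 2) (t * x / (1 - t))
    * besselKt (ν / 2) (x / (1 - t))

/-- The eigenfunctions `Λ_j^{μ,ν}`, defined as the Taylor coefficients in `t` at `t = 0` of the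
generating function `G^{μ,ν}(t,x) = Σ_{j≥0} Λ_j^{μ,ν}(x) t^j`. -/
def LambdaF (μ ν : ℝ) (j : ℕ) (x : ℝ) : ℝ :=
  iteratedDeriv j (fun t => genFun μ ν t x) 0 / j.factorial

/-- The integrality condition: `μ ≥ ν ≥ −1` are integers of the same parity,
not both equal to `−1`. -/
def IntCond (μ ν : ℤ) : Prop :=
  -1 ≤ ν ∧ ν ≤ μ ∧ Even (μ - ν) ∧ ¬(μ = -1 ∧ ν = -1)

end

namespace CC
noncomputable section

def cf (α : ℝ) (m : ℕ) : ℝ := (-1) ^ m / (m.factorial * Real.Gamma (m + α + 1))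

def gf (α w : ℝ) : ℝ := ∑' m : ℕ, cf α m * w ^ m

lemma besselJt_eq (α z : ℝ) : besselJt α z = gf α ((z / 2) ^ 2) := by
  simp only [besselJt, gf, cf, pow_mul]

lemma Gamma_lower {α : ℝ} (hα : -1 / 2 ≤ α) (m : ℕ) :
    (1 / 2 : ℝ) ^ m * Real.Gamma (α + 1) ≤ Real.Gamma (m + α + 1) := by
  induction m with
  | zero => simp
  | succ m ih =>
    have hm : (0 : ℝ) ≤ m := Nat.cast_nonneg m
    have h1 : Real.Gamma ((m + 1 : ℕ) + α + 1) = (m + α + 1) * Real.Gamma (m + α + 1) := by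
      rw [← Real.Gamma_add_one (by linarith)]; push_cast; ring_nf
    rw [h1, pow_succ]
    have h2 : 0 < Real.Gamma (m + α + 1) := Real.Gamma_pos_of_pos (by linarith)
    nlinarith

lemma cf_bound {α : ℝ} (hα : -1 / 2 ≤ α) (m : ℕ) :
    |cf α m| ≤ 2 ^ m / m.factorial / Real.Gamma (α + 1) := by
  have h0 : 0 < Real.Gamma (α + 1) := Real.Gamma_pos_of_pos (by linarith)
  have hm : (0 : ℝ) ≤ m := Nat.cast_nonneg m
  have h2 : 0 < Real.Gamma (m + α + 1) := Real.Gamma_pos_of_pos (by linarith)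
  have hf : (0 : ℝ) < m.factorial := by positivity
  rw [cf, abs_div, abs_pow, abs_neg, abs_one, one_pow, abs_of_pos (mul_pos hf h2), div_div,
    div_le_div_iff₀ (by positivity) (by positivity)]
  have := Gamma_lower hα m
  have h3 : Real.Gamma (α + 1) ≤ 2 ^ m * Real.Gamma (m + α + 1) := by
    calc Real.Gamma (α + 1) = 2 ^ m * ((1 / 2 : ℝ) ^ m * Real.Gamma (α + 1)) := by
          rw [← mul_assoc, ← mul_pow]; norm_num
      _ ≤ _ := by gcongr
  nlinarith

lemma cf_summable {α : ℝ} (hα : -1 / 2 ≤ α) (w : ℝ) : Summable fun m => cf α m * w ^ m := by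
  apply Summable.of_norm_bounded
    (g := fun m : ℕ => (2 * |w|) ^ m / m.factorial / Real.Gamma (α + 1))
    ((Real.summable_pow_div_factorial _).div_const _)
  intro m
  rw [norm_mul, norm_pow, Real.norm_eq_abs, Real.norm_eq_abs, mul_pow]
  calc |cf α m| * |w| ^ m ≤ 2 ^ m / m.factorial / Real.Gamma (α + 1) * |w| ^ m := by
        gcongr; exact cf_bound hα m
    _ = _ := by ring

lemma cf_succ (α : ℝ) (m : ℕ) : cf α (m + 1) * ((m + 1 : ℕ) : ℝ) = - cf (α + 1) m := by
  unfold cf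
  have : ((m + 1 : ℕ) : ℝ) + α + 1 = m + (α + 1) + 1 := by push_cast; ring
  rw [this, Nat.factorial_succ, pow_succ]
  push_cast
  have h : (m : ℝ) + 1 ≠ 0 := by positivity
  field_simp

lemma gf_deriv {α : ℝ} (hα : -1 / 2 ≤ α) (w : ℝ) : HasDerivAt (gf α) (- gf (α + 1) w) w := by
  set R := |w| + 1
  have hR : 0 < R := by positivity
  have key : HasDerivAt (fun z => ∑' m, cf α m * z ^ m)
      (∑' m, cf α m * (m * w ^ (m - 1))) w := by
    apply hasDerivAt_tsum_of_isPreconnected (t := Metric.ball (0 : ℝ) R) (y₀ := w)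
      (g := fun m z => cf α m * z ^ m) (g' := fun m z => cf α m * (m * z ^ (m - 1)))
      (u := fun m => |cf α m| * (m * R ^ (m - 1)))
    · rw [← summable_nat_add_iff 1]
      refine (((cf_summable (α := α + 1) (by linarith) R).abs)).congr ?_
      intro m
      rw [Nat.add_sub_cancel, ← mul_assoc, abs_mul, ← abs_neg, ← cf_succ, abs_mul, abs_pow, Nat.abs_cast,
        abs_of_pos hR]
    · exact Metric.isOpen_ball
    · exact (convex_ball _ _).isPreconnected
    · intro m y _
      exact (hasDerivAt_pow m y).const_mul _
    · intro m y hy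
      rw [mem_ball_zero_iff, Real.norm_eq_abs] at hy
      rw [norm_mul, norm_mul, norm_pow, Real.norm_eq_abs, Real.norm_eq_abs, Real.norm_eq_abs, Nat.abs_cast]
      gcongr
    · simp [R]
    · exact cf_summable hα w
    · simp [R]
  have hgoal : HasDerivAt (gf α) (∑' m, cf α m * (m * w ^ (m - 1))) w := key
  convert hgoal using 1
  have hs : Summable fun m : ℕ => cf α m * (m * w ^ (m - 1)) := by
    rw [← summable_nat_add_iff 1]
    refine ((cf_summable (α := α + 1) (by linarith) w).neg).congr ?_
    intro m
    rw [Nat.add_sub_cancel, ← mul_assoc, cf_succ]; ring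
  rw [hs.tsum_eq_zero_add]
  simp only [Nat.cast_zero, zero_mul, mul_zero, zero_add, Nat.add_sub_cancel, ← mul_assoc, cf_succ]
  rw [gf, ← tsum_neg]
  simp

lemma gf_rec {α : ℝ} (hα : -1 / 2 ≤ α) (w : ℝ) :
    w * gf (α + 2) w = (α + 1) * gf (α + 1) w - gf α w := by
  have h1 := cf_summable (α := α + 1) (by linarith) w
  have h0 := cf_summable (α := α) (by linarith) w
  unfold gf
  rw [← tsum_mul_left, ← tsum_mul_left, ← (h1.mul_left (α + 1)).tsum_sub h0,
    ((h1.mul_left (α + 1)).sub h0).tsum_eq_zero_add]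
  have hG : ∀ m : ℕ, Real.Gamma (m + (α + 1) + 1) = (m + α + 1) * Real.Gamma (m + α + 1) := by
    intro m
    have hm : (0 : ℝ) ≤ m := Nat.cast_nonneg m
    rw [← Real.Gamma_add_one (by linarith)]; ring_nf
  have key : ∀ m : ℕ, (α + 1) * cf (α + 1) m - cf α m = - m * cf (α + 1) m := by
    intro m
    have hm : (0 : ℝ) ≤ m := Nat.cast_nonneg m
    have h2 : 0 < Real.Gamma (m + α + 1) := Real.Gamma_pos_of_pos (by linarith)
    have h3 : (m : ℝ) + α + 1 ≠ 0 := by linarith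
    unfold cf
    rw [hG]
    field_simp
    ring
  have h00 := key 0
  simp only [Nat.cast_zero, neg_zero, zero_mul] at h00
  rw [pow_zero, mul_one, mul_one, h00, zero_add]
  congr 1; ext m
  have := key (m + 1)
  have h2 := cf_succ (α + 1) m
  rw [show α + 1 + 1 = α + 2 by ring] at h2
  have e : (α + 1) * (cf (α + 1) (m + 1) * w ^ (m + 1)) - cf α (m + 1) * w ^ (m + 1)
    = ((α + 1) * cf (α + 1) (m + 1) - cf α (m + 1)) * w ^ (m + 1) := by ring
  rw [e, this, pow_succ]
  linear_combination w ^ m * w * h2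

lemma J_deriv {α : ℝ} (hα : -1 / 2 ≤ α) (z : ℝ) :
    HasDerivAt (besselJt α) (-(z / 2) * besselJt (α + 1) z) z := by
  have h1 : HasDerivAt (fun z : ℝ => (z / 2) ^ 2) (z / 2) z := by
    refine (((hasDerivAt_id' z).div_const 2).pow 2).congr_deriv ?_
    simp; ring
  have := (gf_deriv hα ((z / 2) ^ 2)).comp z h1
  have e : besselJt α = gf α ∘ fun z => (z / 2) ^ 2 := by ext; simp [besselJt_eq]
  rw [e, besselJt_eq]
  refine this.congr_deriv ?_
  ring

lemma J_cont {α : ℝ} (hα : -1 / 2 ≤ α) : Continuous (besselJt α) :=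
  continuous_iff_continuousAt.2 fun z => (J_deriv hα z).continuousAt

lemma J_neg_half (z : ℝ) : besselJt (-1 / 2) z = Real.cos z / √π := by
  have hG : ∀ m : ℕ, Real.Gamma (m + (-1 / 2) + 1) = (2 * m).factorial / (4 ^ m * m.factorial) * √π := by
    intro m
    induction m with
    | zero => rw [← Real.Gamma_one_half_eq]; norm_num
    | succ m ih =>
      have h1 : Real.Gamma ((m + 1 : ℕ) + (-1 / 2) + 1)
          = (m + (-1 / 2) + 1) * Real.Gamma (m + (-1 / 2) + 1) := by
        have hm : (0 : ℝ) ≤ m := Nat.cast_nonneg m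
        rw [← Real.Gamma_add_one (by linarith)]; push_cast; ring_nf
      rw [h1, ih, show 2 * (m + 1) = 2 * m + 1 + 1 by ring, Nat.factorial_succ, Nat.factorial_succ,
        Nat.factorial_succ]
      push_cast
      field_simp
      ring
  rw [besselJt]
  refine Eq.trans (tsum_congr fun m => ?_) ((Real.hasSum_cos z).div_const (√π)).tsum_eq
  rw [hG]
  have : √π ≠ 0 := by positivity
  rw [pow_mul, div_pow, pow_mul, div_pow]
  field_simp
  norm_num
  ring

lemma J_half (z : ℝ) : z * besselJt (1 / 2) z = 2 * Real.sin z / √π := by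
  have h1 := J_deriv (α := -1 / 2) le_rfl z
  have e : besselJt (-1 / 2) = fun z => Real.cos z / √π := by ext z; exact J_neg_half z
  rw [e] at h1
  have h2 := (Real.hasDerivAt_cos z).div_const (√π)
  have := h1.unique h2
  rw [show (-1 / 2 + 1 : ℝ) = 1 / 2 by norm_num] at this
  have h : √π ≠ 0 := by positivity
  field_simp at this ⊢
  linarith

lemma bdd_of_far {α : ℝ} (hα : -1 / 2 ≤ α) {C : ℝ} (h : ∀ z, 2 ≤ |z| → |besselJt α z| ≤ C) :
    ∃ C, ∀ z, |besselJt α z| ≤ C := by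
  obtain ⟨C', hC'⟩ := (isCompact_Icc (a := (-2 : ℝ)) (b := 2)).exists_bound_of_continuousOn
    (J_cont hα).continuousOn
  refine ⟨max C C', fun z => ?_⟩
  rcases le_total 2 |z| with hz | hz
  · exact (h z hz).trans (le_max_left _ _)
  · exact (hC' z (abs_le.1 hz)).trans (le_max_right _ _)

lemma J_bdd (l : ℕ) : (∃ C, ∀ z, |besselJt (l - 1 / 2) z| ≤ C) ∧
    (∃ C, ∀ z, |besselJt (l + 1 / 2) z| ≤ C) := by
  induction l with
  | zero =>
    have hp : 0 < √π := by positivity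
    constructor
    · refine ⟨1 / √π, fun z => ?_⟩
      rw [show ((0 : ℕ) : ℝ) - 1 / 2 = -1 / 2 by norm_num, J_neg_half, abs_div, abs_of_pos hp]
      gcongr
      exact Real.abs_cos_le_one z
    · refine bdd_of_far (C := 1 / √π) (by norm_num) fun z hz => ?_
      have h := J_half z
      rw [Nat.cast_zero, zero_add]
      have h2 : |z| * |besselJt (1 / 2) z| ≤ 2 / √π := by
        rw [← abs_mul, h, abs_div, abs_of_pos hp, abs_mul, abs_two]
        gcongr
        linarith [Real.abs_sin_le_one z]
      have h3 : 2 * |besselJt (1 / 2) z| ≤ 2 / √π := le_trans (by gcongr) h2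
      have : 2 / √π = 2 * (1 / √π) := by ring
      linarith
  | succ l ih =>
    obtain ⟨⟨C0, h0⟩, ⟨C1, h1⟩⟩ := ih
    have hl : (0 : ℝ) ≤ l := Nat.cast_nonneg l
    refine ⟨⟨C1, fun z => ?_⟩, ?_⟩
    · have := h1 z
      rwa [show ((l + 1 : ℕ) : ℝ) - 1 / 2 = l + 1 / 2 by push_cast; ring]
    · refine bdd_of_far (C := (l + 1 / 2) * C1 + C0) (by push_cast; linarith) fun z hz => ?_
      have h := gf_rec (α := l - 1 / 2) (by linarith) ((z / 2) ^ 2)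
      rw [← besselJt_eq, ← besselJt_eq, ← besselJt_eq, show (l : ℝ) - 1 / 2 + 1 = l + 1 / 2 by ring,
        show (l : ℝ) - 1 / 2 + 2 = (l + 1 : ℕ) + 1 / 2 by push_cast; ring] at h
      have hz2 : 1 ≤ (z / 2) ^ 2 := by
        have := sq_abs z
        nlinarith
      set Y := besselJt ((l + 1 : ℕ) + 1 / 2) z
      have h3 : (z / 2) ^ 2 * |Y| ≤ (l + 1 / 2) * C1 + C0 := by
        rw [← abs_of_nonneg (sq_nonneg (z / 2)), ← abs_mul, h]
        refine (abs_sub _ _).trans ?_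
        rw [abs_mul, abs_of_nonneg (by linarith : (0 : ℝ) ≤ l + 1 / 2)]
        gcongr
        · exact h1 z
        · exact h0 z
      nlinarith [abs_nonneg Y]

end
end CC

namespace CC
noncomputable section

lemma integrable_pow_exp (n : ℕ) {r : ℝ} (hr : 0 < r) :
    IntegrableOn (fun x : ℝ => x ^ n * Real.exp (-(r * x))) (Set.Ioi 0) := by
  have := integrableOn_rpow_mul_exp_neg_mul_rpow (p := 1) (s := n) (b := r)
    (by have : (0 : ℝ) ≤ n := Nat.cast_nonneg n
        linarith) one_pos hr
  simpa using this

lemma norm_cexp (p : ℂ) (x : ℝ) : ‖Complex.exp (-p * x)‖ = Real.exp (-(p.re * x)) := by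
  rw [Complex.norm_exp]; simp

lemma integrable_lap (n : ℕ) {h : ℝ → ℝ} (hc : Continuous h) {C : ℝ} (hC : ∀ z, |h z| ≤ C)
    {p : ℂ} (hp : 0 < p.re) :
    IntegrableOn (fun x : ℝ => ((x ^ n * h x : ℝ) : ℂ) * Complex.exp (-p * x)) (Set.Ioi 0) := by
  refine Integrable.mono' ((integrable_pow_exp n hp).const_mul C) ?_ ?_
  · refine Continuous.aestronglyMeasurable ?_
    fun_prop
  · refine (ae_restrict_mem measurableSet_Ioi).mono fun x hx => ?_
    have hx : 0 < x := hx
    rw [norm_mul, norm_cexp, Complex.norm_real, norm_mul, Real.norm_eq_abs, Real.norm_eq_abs,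
      abs_of_pos (pow_pos hx n)]
    have := hC x
    have h2 : 0 ≤ x ^ n * Real.exp (-(p.re * x)) := by positivity
    nlinarith

def Lap (l : ℕ) (a : ℝ) (p : ℂ) : ℂ :=
  ∫ x in Set.Ioi (0 : ℝ), ((x ^ (2 * l + 1) * besselJt (l + 1 / 2) (a * x) : ℝ) : ℂ)
    * Complex.exp (-p * x)

lemma hl_half (l : ℕ) : (-1 / 2 : ℝ) ≤ l + 1 / 2 := by
  have : (0 : ℝ) ≤ l := Nat.cast_nonneg l
  linarith

lemma Jl_cont (l : ℕ) (a : ℝ) : Continuous fun x => besselJt (l + 1 / 2) (a * x) :=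
  (J_cont (hl_half l)).comp (continuous_const.mul continuous_id)

lemma Lap_deriv (l : ℕ) (a : ℝ) {p : ℂ} (hp : 0 < p.re) :
    HasDerivAt (fun a => Lap l a p) (-(a / 2) * Lap (l + 1) a p) a := by
  obtain ⟨C0, h0⟩ := (J_bdd l).2
  obtain ⟨C1, h1⟩ := (J_bdd (l + 1)).2
  have hC1 : 0 ≤ C1 := (abs_nonneg _).trans (h1 0)
  have key := hasDerivAt_integral_of_dominated_loc_of_deriv_le
    (μ := volume.restrict (Set.Ioi (0 : ℝ))) (𝕜 := ℝ) (E := ℂ)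
    (F := fun a x => ((x ^ (2 * l + 1) * besselJt (l + 1 / 2) (a * x) : ℝ) : ℂ)
      * Complex.exp (-p * x))
    (F' := fun a x => ((-(a / 2) : ℝ) : ℂ) *
      (((x ^ (2 * (l + 1) + 1) * besselJt ((l + 1 : ℕ) + 1 / 2) (a * x) : ℝ) : ℂ)
      * Complex.exp (-p * x)))
    (x₀ := a) (s := Metric.ball a 1)
    (bound := fun x => ((|a| + 1) / 2 * C1) * (x ^ (2 * (l + 1) + 1) * Real.exp (-(p.re * x))))
    (Metric.ball_mem_nhds a one_pos) ?_ ?_ ?_ ?_ ?_ ?_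
  · have := key.2
    rw [integral_const_mul] at this
    refine this.congr_deriv ?_
    simp [Lap]
  · refine Filter.Eventually.of_forall fun b => ?_
    exact (integrable_lap _ (Jl_cont l b) (fun z => h0 _) hp).aestronglyMeasurable
  · exact integrable_lap _ (Jl_cont l a) (fun z => h0 _) hp
  · exact ((integrable_lap _ (Jl_cont (l + 1) a) (fun z => h1 _) hp).const_mul _).aestronglyMeasurable
  · refine (ae_restrict_mem measurableSet_Ioi).mono fun x hx b hb => ?_
    have hx : 0 < x := hx
    have hb' : |b| ≤ |a| + 1 := by
      have : |b - a| < 1 := by simpa [Real.dist_eq] using hb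
      have h3 := abs_sub_abs_le_abs_sub b a
      linarith
    rw [norm_mul, norm_mul, norm_cexp, Complex.norm_real, Complex.norm_real, norm_mul,
      Real.norm_eq_abs, Real.norm_eq_abs, Real.norm_eq_abs,
      abs_of_pos (pow_pos hx _), abs_neg, abs_div, abs_two]
    have h2 : 0 ≤ x ^ (2 * (l + 1) + 1) * Real.exp (-(p.re * x)) := by positivity
    calc |b| / 2 * (x ^ (2 * (l + 1) + 1) * |besselJt ((l + 1 : ℕ) + 1 / 2) (b * x)|
            * Real.exp (-(p.re * x)))
        = (|b| / 2 * |besselJt ((l + 1 : ℕ) + 1 / 2) (b * x)|) *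
            (x ^ (2 * (l + 1) + 1) * Real.exp (-(p.re * x))) := by ring
      _ ≤ _ := by
        gcongr
        exact h1 _
  · exact (integrable_pow_exp _ hp).const_mul _
  · refine Filter.Eventually.of_forall fun x b _ => ?_
    have hJ := J_deriv (hl_half l) (b * x)
    have h3 : HasDerivAt (fun b : ℝ => b * x) x b := by
      simpa using (hasDerivAt_id b).mul_const x
    have h4 := (((hJ.comp b h3).const_mul (x ^ (2 * l + 1))).ofReal_comp).mul_const
      (Complex.exp (-p * x))
    refine h4.congr_deriv ?_
    have e : (l : ℝ) + 1 / 2 + 1 = (l + 1 : ℕ) + 1 / 2 := by push_cast; ring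
    rw [e, show 2 * (l + 1) + 1 = 2 * l + 1 + 2 by ring]
    push_cast
    ring

lemma den_ne {p : ℂ} (hp : 0 < p.re) (a : ℝ) : p ^ 2 + (a : ℂ) ^ 2 ≠ 0 := by
  have e : p ^ 2 + (a : ℂ) ^ 2 = (p + a * Complex.I) * (p - a * Complex.I) := by
    linear_combination (a : ℂ) ^ 2 * Complex.I_sq
  rw [e]
  refine mul_ne_zero ?_ ?_
  · intro h
    have := congrArg Complex.re h
    simp at this
    linarith
  · intro h
    have := congrArg Complex.re h
    simp at this
    linarith

lemma Lap_base {p : ℂ} (hp : 0 < p.re) {a : ℝ} (ha : a ≠ 0) :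
    Lap 0 a p = (2 / √π : ℝ) / (p ^ 2 + (a : ℂ) ^ 2) := by
  have hsp : √π ≠ 0 := by positivity
  have e : ∀ x : ℝ, ((x ^ (2 * 0 + 1) * besselJt ((0 : ℕ) + 1 / 2) (a * x) : ℝ) : ℂ)
      * Complex.exp (-p * x) = ((1 / (a * √π) : ℝ) : ℂ) / Complex.I *
        (Complex.exp ((-p + a * Complex.I) * x) - Complex.exp ((-p - a * Complex.I) * x)) := by
    intro x
    have h := J_half (a * x)
    have h2 : x ^ (2 * 0 + 1) * besselJt ((0 : ℕ) + 1 / 2) (a * x)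
        = 1 / (a * √π) * (2 * Real.sin (a * x)) := by
      simp only [Nat.cast_zero, zero_add, mul_zero, pow_one]
      field_simp at h ⊢
      linear_combination h
    rw [h2]
    push_cast
    rw [Complex.sin, show (-p + a * Complex.I) * x = -p * x + (a * x) * Complex.I by ring,
      show (-p - a * Complex.I) * x = -p * x + (-(a * x)) * Complex.I by ring, Complex.exp_add,
      Complex.exp_add]
    have haC : (a : ℂ) ≠ 0 := by exact_mod_cast ha
    have hspC : ((√π : ℝ) : ℂ) ≠ 0 := by exact_mod_cast hsp
    rw [Complex.div_I]
    field_simp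
    ring
  have r1 : (-p + a * Complex.I).re < 0 := by simpa using hp
  have r2 : (-p - a * Complex.I).re < 0 := by simpa using hp
  unfold Lap
  simp_rw [e]
  rw [integral_const_mul, integral_sub (integrableOn_exp_mul_complex_Ioi r1 0)
    (integrableOn_exp_mul_complex_Ioi r2 0), integral_exp_mul_complex_Ioi r1,
    integral_exp_mul_complex_Ioi r2]
  have n1 : -p + a * Complex.I ≠ 0 := fun h => by rw [h] at r1; simp at r1
  have n2 : -p - a * Complex.I ≠ 0 := fun h => by rw [h] at r2; simp at r2
  have n3 := den_ne hp a
  have haC : (a : ℂ) ≠ 0 := by exact_mod_cast ha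
  have hspC : ((√π : ℝ) : ℂ) ≠ 0 := by exact_mod_cast hsp
  have e3 : -Complex.exp ((-p + a * Complex.I) * (0 : ℝ)) / (-p + a * Complex.I)
      - -Complex.exp ((-p - a * Complex.I) * (0 : ℝ)) / (-p - a * Complex.I)
      = 2 * a * Complex.I / (p ^ 2 + (a : ℂ) ^ 2) := by
    simp only [Complex.ofReal_zero, mul_zero, Complex.exp_zero]
    rw [div_sub_div _ _ n1 n2, div_eq_div_iff (mul_ne_zero n1 n2) n3]
    linear_combination (2 * a ^ 3 * Complex.I) * Complex.I_sq
  rw [e3]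
  push_cast
  have := Complex.I_ne_zero
  field_simp

lemma Lap_ext {p : ℂ} (hp : 0 < p.re) (l : ℕ) (K : ℂ)
    (h : ∀ a : ℝ, a ≠ 0 → Lap l a p = K / (p ^ 2 + (a : ℂ) ^ 2) ^ (l + 1)) (a : ℝ) :
    Lap l a p = K / (p ^ 2 + (a : ℂ) ^ 2) ^ (l + 1) := by
  have c1 : Continuous fun a => Lap l a p :=
    continuous_iff_continuousAt.2 fun a => (Lap_deriv l a hp).continuousAt
  have c2 : Continuous fun a : ℝ => K / (p ^ 2 + (a : ℂ) ^ 2) ^ (l + 1) := by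
    refine Continuous.div continuous_const (by fun_prop) fun a => pow_ne_zero _ (den_ne hp a)
  exact congrFun (Continuous.ext_on (dense_compl_singleton (0 : ℝ)) c1 c2 fun a ha => h a ha) a

lemma Lap_eq {p : ℂ} (hp : 0 < p.re) (l : ℕ) : ∀ a : ℝ,
    Lap l a p = ((2 ^ (2 * l + 1) * l.factorial / √π : ℝ) : ℂ) / (p ^ 2 + (a : ℂ) ^ 2) ^ (l + 1) := by
  induction l with
  | zero =>
    refine Lap_ext hp 0 _ fun a ha => ?_
    rw [Lap_base hp ha]; simp
  | succ l ih =>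
    refine Lap_ext hp (l + 1) _ fun a ha => ?_
    have h1 := Lap_deriv l a hp
    rw [funext ih] at h1
    have n := den_ne hp a
    have d : HasDerivAt (fun a : ℝ => (p ^ 2 + (a : ℂ) ^ 2) ^ (l + 1))
        ((l + 1 : ℕ) * (p ^ 2 + (a : ℂ) ^ 2) ^ l * (2 * a)) a := by
      have d1 : HasDerivAt (fun a : ℝ => p ^ 2 + (a : ℂ) ^ 2) (2 * a) a := by
        have d0 := (((hasDerivAt_id' a).ofReal_comp).pow 2).const_add (p ^ 2)
        refine d0.congr_deriv ?_
        simp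
      exact (d1.pow (l + 1)).congr_deriv (by simp)
    have h2 := (hasDerivAt_const a ((2 ^ (2 * l + 1) * l.factorial / √π : ℝ) : ℂ)).div d
      (pow_ne_zero _ n)
    have h3 := h1.unique h2
    have haC : (a : ℂ) ≠ 0 := by exact_mod_cast ha
    have hspC : ((√π : ℝ) : ℂ) ≠ 0 := by
      have : √π ≠ 0 := by positivity
      exact_mod_cast this
    have h4 : Lap (l + 1) a p = -(2 / a) * (-(a / 2) * Lap (l + 1) a p) := by field_simp
    rw [h4, h3, Nat.factorial_succ]
    push_cast
    field_simp
    ring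

end
end CC

namespace CC
noncomputable section

lemma hasSum_antidiag {E : Type*} [NormedAddCommGroup E] {T : ℕ × ℕ → E} {s : E} (h : HasSum T s) :
    HasSum (fun n => ∑ q ∈ Finset.HasAntidiagonal.antidiagonal n, T q) s := by
  have h1 := (Finset.HasAntidiagonal.sigmaAntidiagonalEquivProd (A := ℕ)).hasSum_iff.mpr h
  refine h1.sigma fun n => ?_
  have := (Finset.HasAntidiagonal.antidiagonal n).hasSum T
  exact this

lemma hasSum_of_eq {E : Type*} [NormedAddCommGroup E] {f g : ℕ → E} {s : E} (h : HasSum g s)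
    (e : ∀ n, f n = g n) : HasSum f s := by
  rw [funext e]; exact h

lemma summable_antidiag {T : ℕ × ℕ → ℝ} (h0 : ∀ q, 0 ≤ T q)
    (h : Summable fun n => ∑ q ∈ Finset.HasAntidiagonal.antidiagonal n, T q) : Summable T := by
  rw [← (Finset.HasAntidiagonal.sigmaAntidiagonalEquivProd (A := ℕ)).summable_iff]
  refine (summable_sigma_of_nonneg (fun q => h0 _)).2 ?_
  refine ⟨fun n => Summable.of_finite, ?_⟩
  refine h.congr fun n => ?_
  symm
  have := ((Finset.HasAntidiagonal.antidiagonal n).hasSum T).tsum_eq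
  exact this

lemma hasSum_of_rows {E : Type*} [NormedAddCommGroup E] [CompleteSpace E]
    {T : ℕ × ℕ → E} {g : ℕ → E} {s : E} (hT : Summable T)
    (hr : ∀ k, HasSum (fun n => T (k, n)) (g k)) (hg : HasSum g s) : HasSum T s := by
  have := hT.hasSum.prod_fiberwise hr
  rw [← this.unique hg]
  exact hT.hasSum

lemma laguerre_gf (μ : ℕ) (y : ℝ) {t : ℝ} (ht : |t| < 1) :
    HasSum (fun j => laguerreL j μ y * t ^ j)
      (1 / (1 - t) ^ (μ + 1) * Real.exp (-(y * t / (1 - t)))) := by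
  have row : ∀ (c s : ℝ) (k : ℕ), |s| < 1 →
      HasSum (fun n => c ^ k / k.factorial * (((n + (k + μ)).choose (k + μ) : ℝ) * s ^ n))
        (1 / (1 - s) ^ (μ + 1) * ((c / (1 - s)) ^ k / k.factorial)) := by
    intro c s k hs
    have h := (hasSum_choose_mul_geometric_of_norm_lt_one (𝕜 := ℝ) (k + μ) (r := s)
      (by simpa using hs)).mul_left (c ^ k / k.factorial)
    have e : c ^ k / k.factorial * (1 / (1 - s) ^ (k + μ + 1))
        = 1 / (1 - s) ^ (μ + 1) * ((c / (1 - s)) ^ k / k.factorial) := by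
      have : 1 - s ≠ 0 := by have := (abs_lt.1 hs).2; linarith
      rw [div_pow, show k + μ + 1 = (μ + 1) + k by ring, pow_add]
      field_simp
    rwa [e] at h
  have col : ∀ c s : ℝ, HasSum (fun k : ℕ => 1 / (1 - s) ^ (μ + 1) * ((c / (1 - s)) ^ k / k.factorial))
      (1 / (1 - s) ^ (μ + 1) * Real.exp (c / (1 - s))) := by
    intro c s
    have := NormedSpace.expSeries_div_hasSum_exp (𝔸 := ℝ) (c / (1 - s))
    rw [← Real.exp_eq_exp_ℝ] at this
    exact this.mul_left _
  have hs : Summable fun q : ℕ × ℕ => (-(y * t)) ^ q.1 / q.1.factorial *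
      (((q.2 + (q.1 + μ)).choose (q.1 + μ) : ℝ) * t ^ q.2) := by
    apply Summable.of_abs
    have ht' : |(|t|)| < 1 := by rwa [abs_abs]
    have := (summable_prod_of_nonneg (f := fun q : ℕ × ℕ => |y * t| ^ q.1 / q.1.factorial *
      (((q.2 + (q.1 + μ)).choose (q.1 + μ) : ℝ) * |t| ^ q.2)) (fun q => by positivity)).2
      ⟨fun k => (row (|y * t|) (|t|) k ht').summable, by
        simp_rw [(row (|y * t|) (|t|) _ ht').tsum_eq]
        exact (col _ _).summable⟩
    refine this.congr fun q => ?_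
    rw [abs_mul (_ / _), abs_div, abs_mul (Nat.cast _), abs_pow, abs_pow, abs_neg, Nat.abs_cast, Nat.abs_cast]
  have h := hasSum_antidiag (hasSum_of_rows hs (fun k => row _ _ k ht) (col _ _))
  rw [← neg_div]
  refine hasSum_of_eq h fun j => ?_
  rw [Finset.Nat.sum_antidiagonal_eq_sum_range_succ_mk, laguerreL, Finset.sum_mul]
  refine Finset.sum_congr rfl fun k hk => ?_
  obtain ⟨n, rfl⟩ := Nat.exists_eq_add_of_le (Nat.lt_succ_iff.1 (Finset.mem_range.1 hk))
  simp only [Nat.add_sub_cancel_left]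
  rw [show n + (k + μ) = k + n + μ by ring,
    ← Nat.choose_symm_of_eq_add (show k + n + μ = n + (k + μ) by ring), neg_pow (y * t), mul_pow, pow_add]
  ring

lemma gegen_gf (l : ℕ) (x : ℝ) {w : ℂ} (hw : 2 * |x| * ‖w‖ + ‖w‖ ^ 2 < 1) :
    HasSum (fun n => (gegenbauerCt n (l + 1) x : ℂ) * w ^ n)
      ((l.factorial : ℂ) / (1 - 2 * x * w + w ^ 2) ^ (l + 1)) := by
  set T : ℕ × ℕ → ℂ := fun q => ((l + q.1 + q.2).factorial : ℂ) / (q.1.factorial * q.2.factorial) *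
    ((-w ^ 2) ^ q.1 * (2 * x * w) ^ q.2) with hT
  have fac : ∀ m : ℕ, ((l + m).factorial : ℂ) / m.factorial = l.factorial * ((m + l).choose l : ℂ) := by
    intro m
    have h1 := Nat.add_choose_mul_factorial_mul_factorial m l
    have h2 : ((m + l).choose l : ℂ) * m.factorial * l.factorial = (m + l).factorial := by
      exact_mod_cast h1
    have : (m.factorial : ℂ) ≠ 0 := by exact_mod_cast m.factorial_ne_zero
    rw [add_comm l m, ← h2]
    field_simp
  have diagC : ∀ (u v : ℂ) (m : ℕ), ∑ q ∈ Finset.HasAntidiagonal.antidiagonal m,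
      ((l + q.1 + q.2).factorial : ℂ) / (q.1.factorial * q.2.factorial) * (u ^ q.1 * v ^ q.2)
      = l.factorial * (((m + l).choose l : ℂ) * (u + v) ^ m) := by
    intro u v m
    rw [← mul_assoc, ← fac, (Commute.all u v).add_pow', Finset.mul_sum]
    refine Finset.sum_congr rfl fun q hq => ?_
    rw [Finset.HasAntidiagonal.mem_antidiagonal] at hq
    subst hq
    have h1 := Nat.add_choose_mul_factorial_mul_factorial q.1 q.2
    have h2 : ((q.1 + q.2).choose q.1 : ℂ) * q.1.factorial * q.2.factorial = (q.1 + q.2).factorial := by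
      rw [Nat.choose_symm_add]; exact_mod_cast h1
    have n1 : (q.1.factorial : ℂ) ≠ 0 := by exact_mod_cast q.1.factorial_ne_zero
    have n2 : (q.2.factorial : ℂ) ≠ 0 := by exact_mod_cast q.2.factorial_ne_zero
    have n3 : ((q.1 + q.2).factorial : ℂ) ≠ 0 := by exact_mod_cast (q.1 + q.2).factorial_ne_zero
    rw [nsmul_eq_mul, ← add_assoc]
    field_simp
    rw [← h2]; ring
  have hr : ‖-w ^ 2 + 2 * x * w‖ < 1 := by
    refine lt_of_le_of_lt (norm_add_le _ _) ?_
    simp only [norm_neg, norm_pow, norm_mul, Complex.norm_real, Real.norm_eq_abs, Complex.norm_ofNat]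
    linarith
  have hTs : Summable T := by
    apply Summable.of_norm
    refine summable_antidiag (fun q => norm_nonneg _) ?_
    have h1 := ((hasSum_choose_mul_geometric_of_norm_lt_one (𝕜 := ℝ) l
      (r := ‖w‖ ^ 2 + 2 * |x| * ‖w‖) (by
        rw [Real.norm_of_nonneg (by positivity)]; linarith)).mul_left (l.factorial : ℝ)).summable
    refine h1.congr fun m => ?_
    have := diagC ((‖w‖ ^ 2 : ℝ) : ℂ) ((2 * |x| * ‖w‖ : ℝ) : ℂ) m
    have h2 : ∀ q : ℕ × ℕ, ‖T q‖ = ((l + q.1 + q.2).factorial : ℝ) / (q.1.factorial * q.2.factorial) *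
      ((‖w‖ ^ 2) ^ q.1 * (2 * |x| * ‖w‖) ^ q.2) := by
      intro q
      simp [hT]
    simp_rw [h2]
    apply Complex.ofReal_injective
    push_cast at this ⊢
    exact this.symm
  have hTsum : HasSum T ((l.factorial : ℂ) / (1 - 2 * x * w + w ^ 2) ^ (l + 1)) := by
    have h1 := hasSum_antidiag hTs.hasSum
    simp only [hT] at h1
    simp_rw [diagC] at h1
    have h2 := (hasSum_choose_mul_geometric_of_norm_lt_one l hr).mul_left (l.factorial : ℂ)
    have h3 := h1.unique h2
    have := hTs.hasSum
    rw [h3] at this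
    convert this using 1
    rw [mul_one_div]
    congr 2
    ring
  -- regroup
  set f : ℕ × ℕ → ℂ := fun q => if q.1 ≤ q.2 then T (q.1, q.2 - q.1) else 0 with hf
  have hinj : Function.Injective (fun q : ℕ × ℕ => (q.1, q.1 + q.2)) := by
    rintro ⟨a, b⟩ ⟨c, d⟩ h
    simp only [Prod.mk.injEq] at h ⊢
    omega
  have hfs : HasSum f ((l.factorial : ℂ) / (1 - 2 * x * w + w ^ 2) ^ (l + 1)) := by
    rw [← hinj.hasSum_iff]
    · convert hTsum using 1
      ext q
      simp [hf]
    · rintro ⟨a, b⟩ hq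
      simp only [hf]
      rw [if_neg]
      intro hab
      exact hq ⟨(a, b - a), by simp; omega⟩
  have h4 := hasSum_antidiag hfs
  refine hasSum_of_eq h4 fun n => ?_
  rw [Finset.Nat.sum_antidiagonal_eq_sum_range_succ_mk, gegenbauerCt]
  push_cast
  rw [Finset.sum_mul]
  have hsub : Finset.range (n / 2 + 1) ⊆ Finset.range (n + 1) := by
    intro k; simp only [Finset.mem_range]; omega
  rw [← Finset.sum_subset hsub]
  · refine Finset.sum_congr rfl fun k hk => ?_
    have hk' : 2 * k ≤ n := by have := Finset.mem_range.1 hk; omega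
    obtain ⟨i, rfl⟩ := Nat.exists_eq_add_of_le hk'
    simp only [hf]
    rw [if_pos (by omega), show 2 * k + i - 2 * k = i by omega, show 2 * k + i - k - k = i by omega]
    simp only [hT]
    have hG : Real.Gamma (l + 1 + (2 * k + i : ℕ) - k) = (l + k + i).factorial := by
      rw [← Real.Gamma_nat_eq_factorial]; congr 1; push_cast; ring
    rw [hG, neg_pow (w ^ 2), mul_pow, mul_pow, mul_pow, pow_add, pow_mul]
    push_cast
    ring
  · intro k hk hk2
    simp only [Finset.mem_range] at hk hk2
    simp only [hf]
    rw [if_neg (by omega)]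

lemma coeff_unique {c d : ℕ → ℝ} {f : ℝ → ℝ} (hc : ∀ t, |t| < 1 / 5 → HasSum (fun n => c n * t ^ n) (f t))
    (hd : ∀ t, |t| < 1 / 5 → HasSum (fun n => d n * t ^ n) (f t)) : c = d := by
  have key : ∀ c : ℕ → ℝ, (∀ t, |t| < 1 / 5 → HasSum (fun n => c n * t ^ n) (f t)) →
      HasFPowerSeriesAt f (FormalMultilinearSeries.ofScalars ℝ c) 0 := by
    intro c hc
    refine ⟨((1 / 10 : NNReal) : ENNReal), ?_, ?_, ?_⟩
    · apply FormalMultilinearSeries.le_radius_of_summable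
      have h10 : |(1 / 10 : ℝ)| < 1 / 5 := by rw [abs_of_pos] <;> norm_num
      refine (hc (1 / 10) h10).summable.abs.congr fun n => ?_
      rw [FormalMultilinearSeries.ofScalars_norm, abs_mul, Real.norm_eq_abs, abs_pow]
      norm_num
    · norm_num
    · intro y hy
      rw [Metric.eball_coe, mem_ball_zero_iff, Real.norm_eq_abs] at hy
      have hy' : |y| < 1 / 5 := by
        refine hy.trans ?_
        norm_num
      simp_rw [FormalMultilinearSeries.ofScalars_apply_eq]
      simpa using hc y hy'
  have := (key c hc).eq_formalMultilinearSeries (key d hd)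
  exact (FormalMultilinearSeries.ofScalars_series_eq_iff ℝ c d).1 this

end
end CC

namespace CC
noncomputable section

lemma laguerre_abs (j μ : ℕ) {y : ℝ} (hy : 0 ≤ y) : |laguerreL j μ y| ≤ laguerreL j μ (-y) := by
  unfold laguerreL
  refine (Finset.abs_sum_le_sum_abs _ _).trans (Finset.sum_le_sum fun k _ => ?_)
  rw [abs_div, abs_mul, abs_mul, abs_pow, abs_neg, abs_one, one_pow, one_mul, Nat.abs_cast,
    Nat.abs_cast, abs_of_nonneg (pow_nonneg hy k), neg_pow y]
  apply le_of_eq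
  have : ((-1 : ℝ) ^ k) * (-1) ^ k = 1 := by rw [← mul_pow]; norm_num
  linear_combination (-((j + μ).choose (j - k) : ℝ) * y ^ k / k.factorial) * this

lemma laguerre_cont (j μ : ℕ) : Continuous fun x => laguerreL j μ x := by
  unfold laguerreL
  fun_prop

/-- The integrand. -/
def ig (l j : ℕ) (a b x : ℝ) : ℝ :=
  laguerreL j (2 * l + 1) (2 * x) * besselJt (l + 1 / 2) (a * x) * Real.sin (b * x)
    * x ^ (2 * l + 1) * Real.exp (-x)

lemma ig_hasSum (l : ℕ) (a b : ℝ) {t : ℝ} (ht : |t| < 1 / 5) :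
    HasSum (fun j => (∫ x in Set.Ioi (0 : ℝ), ig l j a b x) * t ^ j)
      (∫ x in Set.Ioi (0 : ℝ), 1 / (1 - t) ^ (2 * l + 1 + 1) *
        (x ^ (2 * l + 1) * besselJt (l + 1 / 2) (a * x) * Real.sin (b * x)
          * Real.exp (-((1 + t) / (1 - t) * x)))) := by
  obtain ⟨C, hC⟩ := (J_bdd l).2
  have hC0 : 0 ≤ C := (abs_nonneg _).trans (hC 0)
  have ht1 : |t| < 1 := by linarith
  have ht1' : |(|t|)| < 1 := by rwa [abs_abs]
  have hne : 1 - t ≠ 0 := by have := (abs_lt.1 ht1).2; linarith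
  have hne' : 1 - |t| ≠ 0 := by linarith
  set r : ℝ := 1 - 2 * |t| / (1 - |t|) with hr
  have hr0 : 0 < r := by
    rw [hr, sub_pos, div_lt_one (by linarith)]; linarith
  have gfb : ∀ x : ℝ, HasSum (fun j => laguerreL j (2 * l + 1) (-(2 * x)) * |t| ^ j
      * (C * (x ^ (2 * l + 1) * Real.exp (-x))))
      (1 / (1 - |t|) ^ (2 * l + 1 + 1) * C * (x ^ (2 * l + 1) * Real.exp (-(r * x)))) := by
    intro x
    have h := (laguerre_gf (2 * l + 1) (-(2 * x)) ht1').mul_right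
      (C * (x ^ (2 * l + 1) * Real.exp (-x)))
    have e : -(r * x) = -(-(2 * x) * |t| / (1 - |t|)) + -x := by
      rw [hr]; field_simp; ring
    have e5 : 1 / (1 - |t|) ^ (2 * l + 1 + 1) * C * (x ^ (2 * l + 1) * Real.exp (-(r * x)))
        = 1 / (1 - |t|) ^ (2 * l + 1 + 1) * Real.exp (-(-(2 * x) * |t| / (1 - |t|)))
          * (C * (x ^ (2 * l + 1) * Real.exp (-x))) := by
      rw [e, Real.exp_add]; ring
    rw [e5]
    exact h
  simp_rw [← integral_mul_const]
  refine hasSum_integral_of_dominated_convergence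
    (fun j x => laguerreL j (2 * l + 1) (-(2 * x)) * |t| ^ j
      * (C * (x ^ (2 * l + 1) * Real.exp (-x)))) ?_ ?_ ?_ ?_ ?_
  · intro j
    refine Continuous.aestronglyMeasurable ?_
    have h1 := Jl_cont l a
    have h2 := (laguerre_cont j (2 * l + 1)).comp (continuous_const.mul continuous_id (M := ℝ) (f := fun _ => (2 : ℝ)))
    have h2' : Continuous fun x : ℝ => laguerreL j (2 * l + 1) (2 * x) := h2
    unfold ig
    fun_prop
  · intro j
    refine (ae_restrict_mem measurableSet_Ioi).mono fun x hx => ?_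
    have hx : 0 < x := hx
    rw [Real.norm_eq_abs, ig, abs_mul, abs_mul, abs_mul, abs_mul, abs_mul, abs_pow, abs_pow,
      abs_of_pos hx, Real.abs_exp]
    have h1 := laguerre_abs j (2 * l + 1) (y := 2 * x) (by positivity)
    have h2 := hC (a * x)
    have h3 := Real.abs_sin_le_one (b * x)
    have h4 : 0 ≤ laguerreL j (2 * l + 1) (-(2 * x)) := (abs_nonneg _).trans h1
    calc _ ≤ laguerreL j (2 * l + 1) (-(2 * x)) * C * 1 * x ^ (2 * l + 1) * Real.exp (-x) * |t| ^ j := by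
          gcongr
      _ = _ := by ring
  · exact Filter.Eventually.of_forall fun x => (gfb x).summable
  · simp_rw [fun x => (gfb x).tsum_eq]
    exact (integrable_pow_exp (2 * l + 1) hr0).const_mul _
  · refine Filter.Eventually.of_forall fun x => ?_
    have h := (laguerre_gf (2 * l + 1) (2 * x) ht1).mul_right
      (x ^ (2 * l + 1) * besselJt (l + 1 / 2) (a * x) * Real.sin (b * x) * Real.exp (-x))
    have e : -((1 + t) / (1 - t) * x) = -(2 * x * t / (1 - t)) + -x := by
      field_simp; ring
    simp only [e, Real.exp_add]
    convert hasSum_of_eq h ?_ using 1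
    · ring
    · intro j
      simp only [ig]; ring

lemma trig_id (ϑ φ t : ℝ) (hD : Real.cos ϑ + Real.cos φ ≠ 0) (ht : 1 - t ≠ 0) :
    ((1 - t : ℝ) : ℂ) ^ 2 * ((((1 + t) / (1 - t) : ℝ) -
      (Real.sin φ / (Real.cos ϑ + Real.cos φ) : ℝ) * Complex.I) ^ 2
      + ((Real.sin ϑ / (Real.cos ϑ + Real.cos φ) : ℝ) : ℂ) ^ 2)
      * (((Real.cos ϑ + Real.cos φ) / 2 : ℝ) * Complex.exp (φ * Complex.I))
      = 1 - 2 * (Real.cos ϑ : ℝ) * (-(t * Complex.exp (φ * Complex.I)))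
        + (-(t * Complex.exp (φ * Complex.I))) ^ 2 := by
  have hE : Complex.exp (φ * Complex.I) = (Real.cos φ : ℂ) + (Real.sin φ : ℂ) * Complex.I := by
    rw [Complex.exp_mul_I]; push_cast; rfl
  rw [hE]
  have h1 : (Real.cos ϑ : ℂ) ^ 2 + (Real.sin ϑ : ℂ) ^ 2 = 1 := by
    exact_mod_cast Real.cos_sq_add_sin_sq ϑ
  have h2 : (Real.cos φ : ℂ) ^ 2 + (Real.sin φ : ℂ) ^ 2 = 1 := by
    exact_mod_cast Real.cos_sq_add_sin_sq φ
  have hD' : (Real.cos ϑ : ℂ) + (Real.cos φ : ℂ) ≠ 0 := by exact_mod_cast hD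
  have ht' : (1 : ℂ) - t ≠ 0 := by exact_mod_cast ht
  simp only [Complex.ofReal_div, Complex.ofReal_add, Complex.ofReal_sub, Complex.ofReal_one,
    Complex.ofReal_ofNat]
  generalize (Real.cos ϑ : ℂ) = c at *
  generalize (Real.sin ϑ : ℂ) = s at *
  generalize (Real.cos φ : ℂ) = C at *
  generalize (Real.sin φ : ℂ) = S at *
  generalize (t : ℂ) = u at *
  have hI := Complex.I_sq
  generalize Complex.I = i at *
  have hN : ((c + C) * (1 + u) - S * (1 - u) * i) ^ 2 + s ^ 2 * (1 - u) ^ 2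
      = 2 * (c + C) * ((C - S * i) + 2 * u * c + u ^ 2 * (C + S * i)) := by
    linear_combination (1 - u) ^ 2 * h1 - (1 - u) ^ 2 * h2 + S ^ 2 * (1 - u) ^ 2 * hI
  have e : (1 - u) ^ 2 * (((1 + u) / (1 - u) - S / (c + C) * i) ^ 2 + (s / (c + C)) ^ 2)
      = (((c + C) * (1 + u) - S * (1 - u) * i) ^ 2 + s ^ 2 * (1 - u) ^ 2) / (c + C) ^ 2 := by
    field_simp
  rw [e, hN]
  field_simp
  linear_combination h2 - S ^ 2 * hI

lemma closed_form (l : ℕ) (ϑ φ : ℝ) (hD : Real.cos ϑ + Real.cos φ > 0) {t : ℝ} (ht : |t| < 1 / 5) :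
    (∫ x in Set.Ioi (0 : ℝ), 1 / (1 - t) ^ (2 * l + 1 + 1) *
        (x ^ (2 * l + 1) * besselJt (l + 1 / 2) (Real.sin ϑ / (Real.cos ϑ + Real.cos φ) * x)
          * Real.sin (Real.sin φ / (Real.cos ϑ + Real.cos φ) * x)
          * Real.exp (-((1 + t) / (1 - t) * x))))
    = (((2 ^ (2 * l + 1) / √π : ℝ) : ℂ) *
        (((Real.cos ϑ + Real.cos φ) / 2 : ℝ) * Complex.exp (φ * Complex.I)) ^ (l + 1) *
        (l.factorial / (1 - 2 * (Real.cos ϑ : ℝ) * (-(t * Complex.exp (φ * Complex.I)))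
        + (-(t * Complex.exp (φ * Complex.I))) ^ 2) ^ (l + 1))).im := by
  set a := Real.sin ϑ / (Real.cos ϑ + Real.cos φ) with ha
  set b := Real.sin φ / (Real.cos ϑ + Real.cos φ) with hb
  have htt := abs_lt.1 ht
  have hne : 1 - t ≠ 0 := by linarith
  have hs0 : 0 < (1 + t) / (1 - t) := div_pos (by linarith) (by linarith)
  set s := (1 + t) / (1 - t) with hs
  set p : ℂ := (s : ℂ) - b * Complex.I with hp
  have hpre : 0 < p.re := by simpa [hp] using hs0
  obtain ⟨C, hC⟩ := (J_bdd l).2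
  have hint := integrable_lap (2 * l + 1) (Jl_cont l a) (fun z => hC _) hpre
  have him : (Lap l a p).im = ∫ x in Set.Ioi (0 : ℝ),
      (x ^ (2 * l + 1) * besselJt (l + 1 / 2) (a * x) * Real.sin (b * x) * Real.exp (-(s * x))) := by
    have h1 := Complex.imCLM.integral_comp_comm hint
    rw [Lap, ← Complex.imCLM_apply, ← h1]
    refine integral_congr_ae (Filter.Eventually.of_forall fun x => ?_)
    simp only [Complex.imCLM_apply, Complex.im_ofReal_mul, Complex.exp_im]
    have e1 : (-p * x).re = -(s * x) := by simp [hp]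
    have e2 : (-p * x).im = b * x := by simp [hp]
    rw [e1, e2]; ring
  rw [integral_const_mul, ← him, Lap_eq hpre]
  have hid := trig_id ϑ φ t hD.ne' hne
  rw [← hid, ← ha, ← hb, ← hs, ← hp, ← Complex.im_ofReal_mul]
  congr 1
  have hn1 := den_ne hpre a
  have hn2 : ((1 - t : ℝ) : ℂ) ≠ 0 := by exact_mod_cast hne
  have hn3 : (((Real.cos ϑ + Real.cos φ) / 2 : ℝ) : ℂ) * Complex.exp (φ * Complex.I) ≠ 0 := by
    refine mul_ne_zero ?_ (Complex.exp_ne_zero _)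
    have : (Real.cos ϑ + Real.cos φ) / 2 ≠ 0 := by positivity
    exact_mod_cast this
  generalize (((Real.cos ϑ + Real.cos φ) / 2 : ℝ) : ℂ) * Complex.exp (φ * Complex.I) = Z at *
  generalize p ^ 2 + (a : ℂ) ^ 2 = Q at *
  have h2 : ((1 / (1 - t) ^ (2 * l + 1 + 1) : ℝ) : ℂ) = 1 / (((1 - t : ℝ) : ℂ) ^ 2) ^ (l + 1) := by
    rw [← pow_mul]; push_cast; ring_nf
  rw [h2, mul_pow, mul_pow]
  have hspC : ((√π : ℝ) : ℂ) ≠ 0 := by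
    have : √π ≠ 0 := by positivity
    exact_mod_cast this
  push_cast at *
  field_simp

lemma rhs_hasSum (l : ℕ) (ϑ φ : ℝ) (A : ℝ) {t : ℝ} (ht : |t| < 1 / 5) :
    HasSum (fun j : ℕ => ((-1) ^ j * (2 ^ (2 * l + 1) / √π) * A ^ (l + 1)
          * Real.sin ((j + (l + 1)) * φ) * gegenbauerCt j (l + 1) (Real.cos ϑ)) * t ^ j)
      (((2 ^ (2 * l + 1) / √π : ℝ) : ℂ) * (A * Complex.exp (φ * Complex.I)) ^ (l + 1) *
        (l.factorial / (1 - 2 * (Real.cos ϑ : ℝ) * (-(t * Complex.exp (φ * Complex.I)))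
        + (-(t * Complex.exp (φ * Complex.I))) ^ 2) ^ (l + 1))).im := by
  have hw : ‖-((t : ℂ) * Complex.exp (φ * Complex.I))‖ = |t| := by
    rw [norm_neg, norm_mul, Complex.norm_exp_ofReal_mul_I, Complex.norm_real, mul_one,
      Real.norm_eq_abs]
  have h := gegen_gf l (Real.cos ϑ) (w := -((t : ℂ) * Complex.exp (φ * Complex.I))) (by
    rw [hw]
    have := Real.abs_cos_le_one ϑ
    have h0 := abs_nonneg t
    nlinarith)
  have h2 := Complex.hasSum_im (h.mul_left
    (((2 ^ (2 * l + 1) / √π : ℝ) : ℂ) * (A * Complex.exp (φ * Complex.I)) ^ (l + 1)))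
  refine hasSum_of_eq h2 fun j => ?_
  have e : ((2 ^ (2 * l + 1) / √π : ℝ) : ℂ) * (A * Complex.exp (φ * Complex.I)) ^ (l + 1) *
      ((gegenbauerCt j (l + 1) (Real.cos ϑ) : ℂ) * (-((t : ℂ) * Complex.exp (φ * Complex.I))) ^ j)
      = (((2 ^ (2 * l + 1) / √π) * A ^ (l + 1) * gegenbauerCt j (l + 1) (Real.cos ϑ)
        * ((-1) ^ j * t ^ j) : ℝ) : ℂ) * Complex.exp (((j + (l + 1)) * φ : ℝ) * Complex.I) := by
    have e2 : Complex.exp (((j + (l + 1)) * φ : ℝ) * Complex.I)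
        = Complex.exp (φ * Complex.I) ^ j * Complex.exp (φ * Complex.I) ^ (l + 1) := by
      rw [← pow_add, ← Complex.exp_nat_mul]
      congr 1
      push_cast
      ring
    rw [e2, neg_pow, mul_pow, mul_pow]
    push_cast
    ring
  rw [e, Complex.im_ofReal_mul, Complex.exp_ofReal_mul_I_im]
  ring

end
end CC

/-- **Corollary C, sine version.** -/
theorem corollaryC_sin (μ : ℕ) (hμ : Odd μ) (hμ1 : 1 ≤ μ) (j : ℕ)
    (ϑ φ : ℝ) (hϑ : ϑ ∈ Set.Icc (0 : ℝ) Real.pi) (hφ : φ ∈ Set.Icc (0 : ℝ) Real.pi)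
    (hpos : Real.cos ϑ + Real.cos φ > 0) :
    ∫ x in Set.Ioi (0 : ℝ),
        laguerreL j μ (2 * x)
          * besselJt ((μ : ℝ) / 2) (Real.sin ϑ / (Real.cos ϑ + Real.cos φ) * x)
          * Real.sin (Real.sin φ / (Real.cos ϑ + Real.cos φ) * x)
          * x ^ (μ : ℝ) * Real.exp (-x)
      = (-1) ^ j * ((2 : ℝ) ^ μ / Real.sqrt Real.pi)
          * ((Real.cos ϑ + Real.cos φ) / 2) ^ (((μ : ℝ) + 1) / 2)
          * Real.sin ((j + ((μ : ℝ) + 1) / 2) * φ)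
          * gegenbauerCt j (((μ : ℝ) + 1) / 2) (Real.cos ϑ) := by
  obtain ⟨l, rfl⟩ := hμ
  set D := Real.cos ϑ + Real.cos φ with hD
  have e1 : ((2 * l + 1 : ℕ) : ℝ) / 2 = l + 1 / 2 := by push_cast; ring
  have e2 : (((2 * l + 1 : ℕ) : ℝ) + 1) / 2 = l + 1 := by push_cast; ring
  have e3 : (D / 2) ^ ((l : ℝ) + 1) = (D / 2) ^ (l + 1) := by
    rw [← Real.rpow_natCast]; push_cast; rfl
  simp only [e1, e2, e3, Real.rpow_natCast]
  have h := CC.coeff_unique (fun t ht => CC.ig_hasSum l (Real.sin ϑ / D) (Real.sin φ / D) ht)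
    (fun t ht => by
      rw [hD, CC.closed_form l ϑ φ hpos ht]
      exact CC.rhs_hasSum l ϑ φ ((Real.cos ϑ + Real.cos φ) / 2) ht)
  exact congrFun h j
end

section
/- Assume the integrality condition on (μ,ν). Then the normalized K-Bessel function x ↦ K̃_{ν/2}(x) belongs to L²(ℝ_+, x^{μ+ν+1}dx) and is an eigenfunction of D_{μ,ν} with eigenvalue λ_0^{μ,ν} = 0, i.e. D_{μ,ν} K̃_{ν/2} = 0 on ℝ_+. -/
open MeasureTheory Real Filter Set Metric

open scoped Topology

/-- Integrand of the integral representation. -/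
noncomputable def hInt (s z t : ℝ) : ℝ := Real.exp (-t) * t ^ (s - 1) * Real.exp (-(z / t))

/-- `H_s(z) = ∫_0^∞ t^{s-1} e^{-t-z/t} dt`. -/
noncomputable def hFun (s z : ℝ) : ℝ := ∫ t in Set.Ioi (0 : ℝ), hInt s z t

lemma hInt_nonneg (s z t : ℝ) (ht : 0 < t) : 0 ≤ hInt s z t := by
  unfold hInt; positivity

lemma hInt_contOn (s z : ℝ) : ContinuousOn (hInt s z) (Set.Ioi 0) := by
  intro t ht
  have ht' : t ≠ 0 := (ne_of_gt ht)
  apply ContinuousAt.continuousWithinAt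
  unfold hInt
  have h1 : ContinuousAt (fun t : ℝ => t ^ (s - 1)) t :=
    Real.continuousAt_rpow_const _ _ (Or.inl ht')
  fun_prop (disch := assumption)

lemma hInt_meas (s z : ℝ) :
    AEStronglyMeasurable (hInt s z) (volume.restrict (Set.Ioi 0)) :=
  (hInt_contOn s z).aestronglyMeasurable measurableSet_Ioi

lemma exp_neg_bound (k y : ℝ) (hk : 0 < k) (hy : 0 < y) :
    Real.exp (-y) ≤ k ^ k * y ^ (-k) := by
  have h1 : y / k ≤ Real.exp (y / k) := by linarith [Real.add_one_le_exp (y / k)]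
  have h2 : (y / k) ^ k ≤ Real.exp y := by
    calc (y / k) ^ k ≤ (Real.exp (y / k)) ^ k :=
          Real.rpow_le_rpow (by positivity) h1 hk.le
      _ = Real.exp y := by
          rw [← Real.exp_mul]; congr 1; field_simp
  rw [Real.div_rpow hy.le hk.le] at h2
  rw [Real.exp_neg, Real.rpow_neg hy.le]
  have hkk : 0 < k ^ k := by positivity
  have hyk : 0 < y ^ k := by positivity
  have : y ^ k ≤ Real.exp y * k ^ k := by
    rwa [div_le_iff₀ hkk] at h2
  rw [← div_eq_mul_inv, le_div_iff₀ hyk, inv_mul_le_iff₀ (Real.exp_pos y)]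
  exact this

lemma hInt_bound (s z k t : ℝ) (hk : 0 < k) (hz : 0 < z) (ht : 0 < t) :
    hInt s z t ≤ k ^ k * z ^ (-k) * (Real.exp (-t) * t ^ (s + k - 1)) := by
  have h := exp_neg_bound k (z / t) hk (by positivity)
  have e : (z / t) ^ (-k) = z ^ (-k) * t ^ k := by
    rw [Real.div_rpow hz.le ht.le, Real.rpow_neg ht.le, div_inv_eq_mul]
  have e2 : t ^ (s + k - 1) = t ^ (s - 1) * t ^ k := by
    rw [← Real.rpow_add ht]; congr 1; ring
  rw [e] at h
  unfold hInt
  calc _ ≤ Real.exp (-t) * t ^ (s - 1) * (k ^ k * (z ^ (-k) * t ^ k)) := by gcongr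
    _ = _ := by rw [e2]; ring

lemma hInt_integrable (s z : ℝ) (hz : 0 < z) : IntegrableOn (hInt s z) (Set.Ioi 0) := by
  have hk : 0 < |s| + 1 := by positivity
  have hg := (Real.GammaIntegral_convergent (s := s + (|s| + 1))
    (by linarith [neg_abs_le s])).const_mul ((|s| + 1) ^ (|s| + 1) * z ^ (-(|s| + 1)))
  refine Integrable.mono' hg (hInt_meas s z) ?_
  refine ae_restrict_of_forall_mem measurableSet_Ioi fun t ht => ?_
  rw [Real.norm_of_nonneg (hInt_nonneg s z t ht)]
  exact hInt_bound s z _ t hk hz ht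

lemma hFun_bound (s z k : ℝ) (hk : 0 < k) (hsk : 0 < s + k) (hz : 0 < z) :
    hFun s z ≤ k ^ k * z ^ (-k) * Real.Gamma (s + k) := by
  rw [Real.Gamma_eq_integral hsk, ← integral_const_mul]
  exact setIntegral_mono_on (hInt_integrable s z hz)
    ((Real.GammaIntegral_convergent hsk).const_mul _) measurableSet_Ioi
    fun t ht => hInt_bound s z k t hk hz ht

lemma hFun_nonneg (s z : ℝ) : 0 ≤ hFun s z :=
  setIntegral_nonneg measurableSet_Ioi fun t ht => hInt_nonneg s z t ht

lemma hInt_anti (s z z' t : ℝ) (hz : z' ≤ z) (ht : 0 < t) : hInt s z t ≤ hInt s z' t := by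
  unfold hInt
  gcongr

lemma hInt_sub_one (s z t : ℝ) (ht : 0 < t) : hInt (s - 1) z t = hInt s z t / t := by
  unfold hInt
  rw [Real.rpow_sub_one ht.ne' (s - 1)]
  ring

lemma hFun_hasDerivAt (s z : ℝ) (hz : 0 < z) : HasDerivAt (hFun s) (-hFun (s - 1) z) z := by
  have key := hasDerivAt_integral_of_dominated_loc_of_deriv_le
    (μ := volume.restrict (Set.Ioi (0 : ℝ))) (F := fun z t => hInt s z t)
    (F' := fun z t => - hInt (s - 1) z t) (x₀ := z) (s := Set.Ioi (z / 2))
    (bound := fun t => hInt (s - 1) (z / 2) t)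
    (Ioi_mem_nhds (by linarith)) (Eventually.of_forall fun z => hInt_meas s z)
    (hInt_integrable s z hz) (hInt_meas _ _).neg
    (by
      refine ae_restrict_of_forall_mem measurableSet_Ioi fun t ht y hy => ?_
      rw [norm_neg, Real.norm_of_nonneg (hInt_nonneg _ _ t ht)]
      exact hInt_anti _ _ _ _ (le_of_lt hy) ht)
    (hInt_integrable _ _ (by linarith))
    (by
      refine ae_restrict_of_forall_mem measurableSet_Ioi fun t ht y hy => ?_
      rw [hInt_sub_one s y t ht]
      unfold hInt
      have h1 : HasDerivAt (fun z : ℝ => -(z / t)) (-(1 / t)) y :=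
        ((hasDerivAt_id y).div_const t).neg
      refine (h1.exp.const_mul (Real.exp (-t) * t ^ (s - 1))).congr_deriv ?_
      ring)
  have := key.2
  rw [integral_neg] at this
  exact this

lemma hFun_symm (s z : ℝ) (hz : 0 < z) : hFun (-s) z = z ^ (-s) * hFun s z := by
  unfold hFun
  have h1 := integral_comp_rpow_Ioi (fun t => hInt (-s) z t) (p := -1) (by norm_num)
  have h2 := integral_comp_mul_left_Ioi' (fun t => |(-1 : ℝ)| * t ^ ((-1 : ℝ) - 1) *
    hInt (-s) z (t ^ (-1 : ℝ))) 0 (b := z⁻¹) (by positivity)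
  simp only [smul_eq_mul, mul_zero] at h1 h2
  rw [← h1, ← h2, ← integral_const_mul, ← integral_const_mul]
  refine setIntegral_congr_fun measurableSet_Ioi fun t ht => ?_
  have ht : 0 < t := ht
  have e1 : (z⁻¹ * t) ^ (-1 : ℝ) = z / t := by
    rw [Real.rpow_neg_one]; field_simp
  have e2 : (z⁻¹ * t) ^ ((-1 : ℝ) - 1) = z ^ 2 / t ^ 2 := by
    rw [show ((-1 : ℝ) - 1) = -(2 : ℕ) by norm_num, Real.rpow_neg (by positivity),
      Real.rpow_natCast]
    field_simp
  simp only [e1, e2]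
  unfold hInt
  have e3 : (z / t) ^ (-s - 1) = z ^ (-s) * t ^ (s - 1) * (t ^ 2 / z) := by
    rw [Real.div_rpow hz.le ht.le, Real.rpow_sub_one hz.ne', Real.rpow_sub_one ht.ne',
      Real.rpow_sub_one ht.ne', Real.rpow_neg ht.le]
    field_simp
  rw [e3, show z / (z / t) = t by field_simp]
  simp only [abs_neg, abs_one, one_mul]
  field_simp

lemma hFun_rec (s z : ℝ) (hz : 0 < z) :
    hFun (s + 1) z = s * hFun s z + z * hFun (s - 1) z := by
  have hd1 := hFun_hasDerivAt (-s) z hz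
  have hd2 : HasDerivAt (fun z : ℝ => z ^ (-s) * hFun s z)
      ((-s) * z ^ (-s - 1) * hFun s z + z ^ (-s) * (-hFun (s - 1) z)) z :=
    (Real.hasDerivAt_rpow_const (Or.inl hz.ne')).mul (hFun_hasDerivAt s z hz)
  have hd3 := hd2.congr_of_eventuallyEq (f₁ := hFun (-s)) (by
    filter_upwards [Ioi_mem_nhds hz] with y hy
    exact hFun_symm s y hy)
  have h := hd1.unique hd3
  have h2 := hFun_symm (s + 1) z hz
  rw [show -(s + 1) = -s - 1 by ring] at h2
  rw [h2, Real.rpow_sub_one hz.ne'] at h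
  have hp : 0 < z ^ (-s) := by positivity
  field_simp at h
  linarith

lemma hFun_tendsto_zero (s : ℝ) (hs : 0 < s) :
    Tendsto (hFun s) (𝓝[>] 0) (𝓝 (Real.Gamma s)) := by
  rw [Real.Gamma_eq_integral hs]
  refine tendsto_integral_filter_of_dominated_convergence
    (fun t => Real.exp (-t) * t ^ (s - 1)) (Eventually.of_forall fun z => hInt_meas s z) ?_
    (Real.GammaIntegral_convergent hs) ?_
  · filter_upwards [self_mem_nhdsWithin] with z hz
    refine ae_restrict_of_forall_mem measurableSet_Ioi fun t ht => ?_
    rw [Real.norm_of_nonneg (hInt_nonneg _ _ t ht)]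
    refine (hInt_anti s z 0 t (le_of_lt hz) ht).trans ?_
    simp [hInt]
  · refine ae_restrict_of_forall_mem measurableSet_Ioi fun t ht => ?_
    have : ContinuousAt (fun z => hInt s z t) 0 := by
      unfold hInt; fun_prop
    have h := this.tendsto.mono_left (nhdsWithin_le_nhds (s := Set.Ioi (0 : ℝ)))
    simpa [hInt] using h

lemma hFun_cont_index (s z : ℝ) (hz : 0 < z) : ContinuousAt (fun s => hFun s z) s := by
  refine continuousAt_of_dominated (bound := fun t => hInt (s - 1) z t + hInt (s + 1) z t)
    (Eventually.of_forall fun s => hInt_meas s z) ?_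
    ((hInt_integrable _ z hz).add (hInt_integrable _ z hz)) ?_
  · filter_upwards [Icc_mem_nhds (show s - 1 < s by linarith) (show s < s + 1 by linarith)]
      with r hr
    refine ae_restrict_of_forall_mem measurableSet_Ioi fun t ht => ?_
    have ht : 0 < t := ht
    rw [Real.norm_of_nonneg (hInt_nonneg _ _ t ht)]
    have : t ^ (r - 1) ≤ t ^ (s - 1 - 1) + t ^ (s + 1 - 1) := by
      have p1 : 0 < t ^ (s - 1 - 1) := by positivity
      have p2 : 0 < t ^ (s + 1 - 1) := by positivity
      rcases le_total t 1 with h | h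
      · have := Real.rpow_le_rpow_of_exponent_ge ht h
          (show s - 1 - 1 ≤ r - 1 by linarith [hr.1])
        linarith
      · have := Real.rpow_le_rpow_of_exponent_le h
          (show r - 1 ≤ s + 1 - 1 by linarith [hr.2])
        linarith
    unfold hInt
    calc _ ≤ Real.exp (-t) * (t ^ (s - 1 - 1) + t ^ (s + 1 - 1)) * Real.exp (-(z / t)) := by
          gcongr
      _ = _ := by ring
  · refine ae_restrict_of_forall_mem measurableSet_Ioi fun t ht => ?_
    have ht : 0 < t := ht
    have h1 : ContinuousAt (fun r : ℝ => t ^ (r - 1)) s :=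
      (Real.continuousAt_const_rpow ht.ne').comp (f := fun r : ℝ => r - 1) (by fun_prop)
    unfold hInt
    fun_prop

/-- Coefficients of the normalized series. -/
noncomputable def aCoef (b : ℝ) (m : ℕ) : ℝ := 1 / (m.factorial * Real.Gamma (m + b + 1))

/-- `A_b(z) = ∑ z^m / (m! Γ(m+b+1))`. -/
noncomputable def aFun (b z : ℝ) : ℝ := ∑' m : ℕ, z ^ m * aCoef b m

lemma inv_Gamma_rec (s : ℝ) : 1 / Real.Gamma s = s * (1 / Real.Gamma (s + 1)) := by
  by_cases hs : s = 0
  · simp [hs, Real.Gamma_zero]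
  · rw [Real.Gamma_add_one hs]
    by_cases hG : Real.Gamma s = 0
    · simp [hG]
    · field_simp

lemma aFun_summable (b z : ℝ) : Summable fun m : ℕ => z ^ m * aCoef b m := by
  refine Summable.of_norm_bounded_eventually_nat (Real.summable_pow_div_factorial |z|) ?_
  filter_upwards [eventually_ge_atTop ⌈1 - b⌉₊] with m hm
  have hm' : 1 - b ≤ m := Nat.ceil_le.mp hm
  have hG : 1 ≤ Real.Gamma (m + b + 1) := by
    have h2 : (2 : ℝ) ≤ m + b + 1 := by linarith
    have h := Real.Gamma_strictMonoOn_Ici.monotoneOn (Set.mem_Ici.mpr le_rfl)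
      (Set.mem_Ici.mpr h2) h2
    rwa [Real.Gamma_two] at h
  have hf : (0 : ℝ) < m.factorial := by positivity
  unfold aCoef
  rw [norm_mul, norm_pow, Real.norm_eq_abs, Real.norm_of_nonneg (by positivity), ← mul_one_div (|z| ^ m)]
  refine mul_le_mul_of_nonneg_left ?_ (by positivity)
  refine one_div_le_one_div_of_le hf ?_
  nlinarith

lemma aCoef_succ (b : ℝ) (m : ℕ) : (m + 1 : ℝ) * aCoef b (m + 1) = aCoef (b + 1) m := by
  unfold aCoef
  rw [Nat.factorial_succ]
  push_cast
  rw [show (m : ℝ) + 1 + b + 1 = m + (b + 1) + 1 by ring]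
  have : (m : ℝ) + 1 ≠ 0 := by positivity
  field_simp

lemma aCoef_rec (b : ℝ) (m : ℕ) : aCoef b m = (m + b + 1) * aCoef (b + 1) m := by
  unfold aCoef
  have := inv_Gamma_rec (m + b + 1)
  rw [show (m : ℝ) + (b + 1) + 1 = m + b + 1 + 1 by ring]
  rw [← one_div_mul_one_div, ← one_div_mul_one_div, this]
  ring

lemma aFun_hasDerivAt (b z : ℝ) : HasDerivAt (aFun b) (aFun (b + 1) z) z := by
  have hderiv : ∀ (m : ℕ) (y : ℝ), HasDerivAt (fun y : ℝ => y ^ m * aCoef b m)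
      ((m * y ^ (m - 1)) * aCoef b m) y := fun m y => (hasDerivAt_pow m y).mul_const _
  have shift : ∀ (m : ℕ) (y : ℝ), (((m + 1 : ℕ) : ℝ) * y ^ (m + 1 - 1)) * aCoef b (m + 1)
      = y ^ m * aCoef (b + 1) m := by
    intro m y
    rw [← aCoef_succ]
    push_cast
    ring
  have hsum : ∀ y : ℝ, Summable fun m : ℕ => ((m * y ^ (m - 1)) * aCoef b m) := by
    intro y
    rw [← summable_nat_add_iff 1]
    simp only [shift]
    exact aFun_summable _ _
  have hR : (0 : ℝ) < |z| + 1 := by positivity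
  have key := hasDerivAt_tsum_of_isPreconnected (𝕜 := ℝ) (F := ℝ)
    (g := fun (m : ℕ) (y : ℝ) => y ^ m * aCoef b m)
    (g' := fun (m : ℕ) (y : ℝ) => (m * y ^ (m - 1)) * aCoef b m)
    (u := fun m : ℕ => ‖(m * (|z| + 1) ^ (m - 1)) * aCoef b m‖)
    (t := Metric.ball (0 : ℝ) (|z| + 1)) (y₀ := 0) (y := z)
    (hsum (|z| + 1)).norm Metric.isOpen_ball (convex_ball _ _).isPreconnected
    (fun m y _ => hderiv m y)
    (by
      intro m y hy
      have hy' : |y| ≤ |z| + 1 := by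
        simpa using (le_of_lt (by simpa using hy : |y| < |z| + 1))
      simp only [norm_mul, norm_pow, Real.norm_eq_abs, abs_of_pos hR]
      gcongr)
    (by simpa using hR) (aFun_summable b 0) (by simp)
  refine HasDerivAt.congr_deriv (f' := ∑' m : ℕ, (m * z ^ (m - 1)) * aCoef b m) key ?_
  rw [(hsum z).tsum_eq_zero_add]
  simp only [shift]
  simp [aFun]

lemma aFun_rec (b z : ℝ) : aFun b z = z * aFun (b + 2) z + (b + 1) * aFun (b + 1) z := by
  have h1 : ∀ m : ℕ, z ^ m * aCoef b m
      = z * (m * z ^ (m - 1) * aCoef (b + 1) m) + (b + 1) * (z ^ m * aCoef (b + 1) m) := by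
    intro m
    rw [aCoef_rec b m]
    cases m with
    | zero => simp
    | succ n => simp only [Nat.add_sub_cancel]; ring
  have shift : ∀ (m : ℕ), (((m + 1 : ℕ) : ℝ) * z ^ (m + 1 - 1)) * aCoef (b + 1) (m + 1)
      = z ^ m * aCoef (b + 2) m := by
    intro m
    rw [show b + 2 = b + 1 + 1 by ring, ← aCoef_succ (b + 1)]
    push_cast
    ring
  have hs : Summable fun m : ℕ => ((m * z ^ (m - 1)) * aCoef (b + 1) m) := by
    rw [← summable_nat_add_iff 1]
    simp only [shift]
    exact aFun_summable _ _
  unfold aFun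
  simp only [h1]
  rw [(hs.mul_left z).tsum_add ((aFun_summable _ _).mul_left _), tsum_mul_left, tsum_mul_left,
    hs.tsum_eq_zero_add]
  simp only [shift]
  simp

lemma aFun_zero (b : ℝ) : aFun b 0 = 1 / Real.Gamma (b + 1) := by
  unfold aFun
  rw [tsum_eq_single 0]
  · simp [aCoef]
  · intro m hm
    simp [hm]

lemma det_const (b z : ℝ) :
    z * aFun (b + 1) z * aFun (-b) z - aFun b z * aFun (-b - 1) z
      = Real.sin (Real.pi * b) / Real.pi := by
  have hd : ∀ z : ℝ, HasDerivAt
      (fun z => z * aFun (b + 1) z * aFun (-b) z - aFun b z * aFun (-b - 1) z) 0 z := by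
    intro z
    have h1 := aFun_hasDerivAt (b + 1) z
    have h2 := aFun_hasDerivAt (-b) z
    have h3 := aFun_hasDerivAt b z
    have h4 := aFun_hasDerivAt (-b - 1) z
    refine ((((hasDerivAt_id z).mul h1).mul h2).sub (h3.mul h4)).congr_deriv ?_
    have r1 := aFun_rec b z
    have r2 := aFun_rec (-b - 1) z
    rw [show b + 1 + 1 = b + 2 by ring]
    rw [show -b - 1 + 2 = -b + 1 by ring, show -b - 1 + 1 = -b by ring] at r2
    rw [show -b - 1 + 1 = -b by ring]
    simp only [id, Pi.mul_apply]
    linear_combination -aFun (-b) z * r1 - aFun (b + 1) z * r2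
  have hc := is_const_of_deriv_eq_zero (fun z => (hd z).differentiableAt)
    (fun z => (hd z).deriv) z 0
  rw [hc, aFun_zero, aFun_zero, aFun_zero, aFun_zero]
  have hG := Real.Gamma_mul_Gamma_one_sub (-b)
  rw [show (1 : ℝ) - -b = b + 1 by ring, show Real.pi * -b = -(Real.pi * b) by ring,
    Real.sin_neg] at hG
  rw [show -b - 1 + 1 = -b by ring, one_div_mul_one_div, mul_comm (Real.Gamma (b + 1)), hG]
  simp [div_neg]

lemma wron_pos (b z : ℝ) (hb : 0 < b) (hz : 0 < z) :
    aFun b z * hFun (b + 1) z + z * aFun (b + 1) z * hFun b z = 1 := by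
  set W : ℝ → ℝ := fun z => aFun b z * hFun (b + 1) z + z * aFun (b + 1) z * hFun b z with hW
  have hd : ∀ z ∈ Set.Ioi (0 : ℝ), HasDerivAt W 0 z := by
    intro z hz
    have h1 := aFun_hasDerivAt (b + 1) z
    have h3 := aFun_hasDerivAt b z
    have h5 := hFun_hasDerivAt (b + 1) z hz
    have h6 := hFun_hasDerivAt b z hz
    refine ((h3.mul h5).add (((hasDerivAt_id z).mul h1).mul h6)).congr_deriv ?_
    have r1 := aFun_rec b z
    have r2 := hFun_rec b z hz
    rw [show b + 1 + 1 = b + 2 by ring, show b + 1 - 1 = b by ring]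
    simp only [id, Pi.mul_apply]
    linear_combination -hFun b z * r1 + aFun (b + 1) z * r2
  have hconst : ∀ y ∈ Set.Ioi (0 : ℝ), W y = W z := by
    intro y hy
    exact isOpen_Ioi.is_const_of_deriv_eq_zero isPreconnected_Ioi
      (fun y hy => (hd y hy).differentiableAt.differentiableWithinAt)
      (fun y hy => (hd y hy).deriv) hy hz
  have hA : ∀ c : ℝ, Tendsto (aFun c) (𝓝[>] 0) (𝓝 (aFun c 0)) := fun c =>
    (aFun_hasDerivAt c 0).continuousAt.tendsto.mono_left nhdsWithin_le_nhds
  have hid : Tendsto (fun z : ℝ => z) (𝓝[>] 0) (𝓝 0) := tendsto_id.mono_left nhdsWithin_le_nhds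
  have hlim : Tendsto W (𝓝[>] 0)
      (𝓝 (aFun b 0 * Real.Gamma (b + 1) + 0 * aFun (b + 1) 0 * Real.Gamma b)) :=
    ((hA b).mul (hFun_tendsto_zero (b + 1) (by linarith))).add
      ((hid.mul (hA (b + 1))).mul (hFun_tendsto_zero b hb))
  have hlim2 : Tendsto W (𝓝[>] 0) (𝓝 (W z)) := by
    refine tendsto_const_nhds.congr' ?_
    filter_upwards [self_mem_nhdsWithin] with y hy
    exact (hconst y hy).symm
  have := tendsto_nhds_unique hlim2 hlim
  rw [aFun_zero, zero_mul, zero_mul, add_zero,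
    one_div_mul_cancel (Real.Gamma_pos_of_pos (by linarith)).ne'] at this
  exact this

lemma wron_aux (z : ℝ) (hz : 0 < z) (n : ℕ) : ∀ b : ℝ, 0 < b + n →
    aFun b z * hFun (b + 1) z + z * aFun (b + 1) z * hFun b z = 1 := by
  induction n with
  | zero => intro b hb; exact wron_pos b z (by simpa using hb) hz
  | succ n ih =>
    intro b hb
    have h := ih (b + 1) (by push_cast at hb; linarith)
    have r1 := aFun_rec b z
    have r2 := hFun_rec (b + 1) z hz
    rw [show b + 1 + 1 = b + 2 by ring] at h r2
    rw [show b + 1 - 1 = b by ring] at r2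
    linear_combination h + hFun (b + 1) z * r1 - aFun (b + 1) z * r2

lemma wron (b z : ℝ) (hz : 0 < z) :
    aFun b z * hFun (b + 1) z + z * aFun (b + 1) z * hFun b z = 1 := by
  obtain ⟨n, hn⟩ := exists_nat_gt (-b)
  exact wron_aux z hz n b (by linarith)

lemma hFun_formula (b z : ℝ) (hz : 0 < z) :
    Real.sin (Real.pi * b) / Real.pi * hFun (-b) z = z ^ (-b) * aFun (-b) z - aFun b z := by
  have w1 := wron b z hz
  have w2 := wron (-b - 1) z hz
  rw [show -b - 1 + 1 = -b by ring] at w2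
  have s1 := hFun_symm b z hz
  have s2 := hFun_symm (b + 1) z hz
  rw [show -(b + 1) = -b - 1 by ring, Real.rpow_sub_one hz.ne'] at s2
  have hd := det_const b z
  have s2' : z * hFun (-b - 1) z = z ^ (-b) * hFun (b + 1) z := by
    rw [s2]; field_simp
  rw [← hd]
  linear_combination (aFun (-b) z * z ^ (-b)) * w1 - aFun b z * w2
    + z * aFun (b + 1) z * aFun (-b) z * s1 + aFun b z * aFun (-b) z * s2'

lemma besselI_eq (b x : ℝ) (hx : 0 < x) :
    besselI b x = (x / 2) ^ b * aFun b (x ^ 2 / 4) := by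
  unfold besselI aFun
  rw [← tsum_mul_left]
  refine tsum_congr fun m => ?_
  have hx2 : 0 < x / 2 := by positivity
  rw [Real.rpow_add hx2, show (2 : ℝ) * m = ((2 * m : ℕ) : ℝ) by push_cast; ring,
    Real.rpow_natCast, pow_mul, show (x / 2) ^ 2 = x ^ 2 / 4 by ring]
  unfold aCoef
  ring

lemma sq_rpow (x b : ℝ) (hx : 0 < x) : (x ^ 2 / 4) ^ b = (x / 2) ^ b * (x / 2) ^ b := by
  have hx2 : 0 < x / 2 := by positivity
  rw [← Real.mul_rpow hx2.le hx2.le]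
  congr 1
  ring

lemma besselK_quot (b x : ℝ) (hx : 0 < x) (hs : Real.sin (b * Real.pi) ≠ 0) :
    Real.pi / 2 * (besselI (-b) x - besselI b x) / Real.sin (b * Real.pi)
      = 1 / 2 * (x / 2) ^ b * hFun (-b) (x ^ 2 / 4) := by
  have hz : 0 < x ^ 2 / 4 := by positivity
  have h := hFun_formula b (x ^ 2 / 4) hz
  rw [sq_rpow x (-b) hx, mul_comm Real.pi b] at h
  have hx2 : 0 < x / 2 := by positivity
  rw [besselI_eq _ _ hx, besselI_eq _ _ hx]
  have hp := Real.pi_pos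
  have e : (x / 2) ^ b * (x / 2) ^ (-b) = 1 := by
    rw [← Real.rpow_add hx2]; simp
  have h' : Real.sin (b * Real.pi) * hFun (-b) (x ^ 2 / 4)
      = Real.pi * ((x / 2) ^ (-b) * (x / 2) ^ (-b) * aFun (-b) (x ^ 2 / 4)
        - aFun b (x ^ 2 / 4)) := by
    rw [← h]; field_simp
  rw [div_eq_iff hs]
  linear_combination -(1 / 2 * (x / 2) ^ b) * h'
    - Real.pi / 2 * (x / 2) ^ (-b) * aFun (-b) (x ^ 2 / 4) * e

lemma sin_ev_ne (a : ℝ) : ∀ᶠ b in 𝓝[≠] a, Real.sin (b * Real.pi) ≠ 0 := by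
  by_cases hs : Real.sin (a * Real.pi) = 0
  · have hd : HasDerivAt (fun b : ℝ => Real.sin (b * Real.pi))
        (Real.cos (a * Real.pi) * (1 * Real.pi)) a :=
      ((hasDerivAt_id a).mul_const Real.pi).sin
    refine hd.eventually_ne (mul_ne_zero ?_ (by simp [Real.pi_ne_zero]))
    intro hc
    have := Real.sin_sq_add_cos_sq (a * Real.pi)
    rw [hs, hc] at this
    norm_num at this
  · have hc : ContinuousAt (fun b : ℝ => Real.sin (b * Real.pi)) a := by fun_prop
    exact (hc.eventually_ne hs).filter_mono nhdsWithin_le_nhds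

lemma besselKt_eq (a x : ℝ) (hx : 0 < x) :
    besselKt a x = 1 / 2 * hFun (-a) (x ^ 2 / 4) := by
  have hz : 0 < x ^ 2 / 4 := by positivity
  have hx2 : 0 < x / 2 := by positivity
  have hK : besselK a x = 1 / 2 * (x / 2) ^ a * hFun (-a) (x ^ 2 / 4) := by
    unfold besselK
    apply Tendsto.limUnder_eq
    have hc : ContinuousAt (fun b : ℝ => 1 / 2 * (x / 2) ^ b * hFun (-b) (x ^ 2 / 4)) a := by
      have h1 : ContinuousAt (fun b : ℝ => (x / 2) ^ b) a :=
        Real.continuousAt_const_rpow hx2.ne'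
      have h2 : ContinuousAt (fun b : ℝ => hFun (-b) (x ^ 2 / 4)) a :=
        (hFun_cont_index (-a) _ hz).comp (f := fun b : ℝ => -b) (by fun_prop)
      fun_prop
    refine (hc.tendsto.mono_left nhdsWithin_le_nhds).congr' ?_
    filter_upwards [sin_ev_ne a] with b hb
    exact (besselK_quot b x hx hb).symm
  unfold besselKt
  rw [hK]
  have e : (x / 2) ^ (-a) * (x / 2) ^ a = 1 := by
    rw [← Real.rpow_add hx2]; simp
  linear_combination 1 / 2 * hFun (-a) (x ^ 2 / 4) * e

lemma hFun_comp_deriv (s x : ℝ) (hx : 0 < x) :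
    HasDerivAt (fun x : ℝ => hFun s (x ^ 2 / 4)) (-hFun (s - 1) (x ^ 2 / 4) * (x / 2)) x := by
  have h1 : HasDerivAt (fun x : ℝ => x ^ 2 / 4) (x / 2) x := by
    refine ((hasDerivAt_pow 2 x).div_const 4).congr_deriv ?_
    norm_num; ring
  exact (hFun_hasDerivAt s (x ^ 2 / 4) (by positivity)).comp x h1

lemma besselKt_euler (a x : ℝ) (hx : 0 < x) :
    eulerOp (besselKt a) x = -(x ^ 2 / 4) * hFun (-a - 1) (x ^ 2 / 4) := by
  unfold eulerOp
  have h : besselKt a =ᶠ[𝓝 x] fun x => 1 / 2 * hFun (-a) (x ^ 2 / 4) := by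
    filter_upwards [Ioi_mem_nhds hx] with y hy
    exact besselKt_eq a y hy
  rw [h.deriv_eq, ((hFun_comp_deriv (-a) x hx).const_mul (1 / 2)).deriv]
  ring

lemma besselQ_zero (ν x : ℝ) (hx : 0 < x) : besselQ ν 0 (besselKt (ν / 2)) x = 0 := by
  unfold besselQ
  have h : (fun y => eulerOp (besselKt (ν / 2)) y + (0 + ν) * besselKt (ν / 2) y) =ᶠ[𝓝 x]
      fun y => -(y ^ 2 / 4) * hFun (-(ν / 2) - 1) (y ^ 2 / 4)
        + ν * (1 / 2 * hFun (-(ν / 2)) (y ^ 2 / 4)) := by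
    filter_upwards [Ioi_mem_nhds hx] with y hy
    rw [besselKt_euler _ y hy, besselKt_eq _ y hy, zero_add]
  have h1 : HasDerivAt (fun x : ℝ => -(x ^ 2 / 4)) (-(x / 2)) x := by
    refine ((hasDerivAt_pow 2 x).div_const 4).neg.congr_deriv ?_
    norm_num; ring
  have hd := (h1.mul (hFun_comp_deriv (-(ν / 2) - 1) x hx)).add
    (((hFun_comp_deriv (-(ν / 2)) x hx).const_mul (1 / 2)).const_mul ν)
  have hd' := (hd.congr_of_eventuallyEq h).deriv
  have e : ∀ u : ℝ → ℝ, eulerOp u x = x * deriv u x := fun _ => rfl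
  rw [e, hd', zero_mul, add_zero, besselKt_eq _ x hx]
  have r := hFun_rec (-(ν / 2) - 1) (x ^ 2 / 4) (by positivity)
  rw [show -(ν / 2) - 1 + 1 = -(ν / 2) by ring] at r
  rw [r]
  ring

lemma Dop_zero (μ ν x : ℝ) (hx : 0 < x) : Dop μ ν (besselKt (ν / 2)) x = 0 := by
  have hu : besselQ ν 0 (besselKt (ν / 2)) =ᶠ[𝓝 x] fun _ => 0 := by
    filter_upwards [Ioi_mem_nhds hx] with y hy
    exact besselQ_zero ν y hy
  have he : ∀ y, 0 < y → eulerOp (besselQ ν 0 (besselKt (ν / 2))) y = 0 := by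
    intro y hy
    have hu : besselQ ν 0 (besselKt (ν / 2)) =ᶠ[𝓝 y] fun _ => 0 := by
      filter_upwards [Ioi_mem_nhds hy] with w hw
      exact besselQ_zero ν w hw
    unfold eulerOp
    rw [hu.deriv_eq]
    simp
  unfold Dop
  generalize hv : besselQ ν 0 (besselKt (ν / 2)) = v at *
  have hv0 : v x = 0 := hu.self_of_nhds
  have h2 : (fun y => eulerOp v y + (μ + ν) * v y) =ᶠ[𝓝 x] fun _ => 0 := by
    filter_upwards [Ioi_mem_nhds hx, hu] with y hy hy2
    rw [he y hy, hy2]; simp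
  have e : ∀ u : ℝ → ℝ, eulerOp u x = x * deriv u x := fun _ => rfl
  have h3 : eulerOp (fun y => eulerOp v y + (μ + ν) * v y) x = 0 := by
    rw [e, h2.deriv_eq]; simp
  unfold besselQ
  rw [h3, he x hx, hv0]
  simp

lemma kt_bound (a k p : ℝ) (hk : 0 < k) (hak : a < k) : ∃ C : ℝ, 0 ≤ C ∧ ∀ x : ℝ, 0 < x →
    (1 / 2 * hFun (-a) (x ^ 2 / 4)) ^ 2 * x ^ p ≤ C * x ^ (p - 4 * k) := by
  refine ⟨(1 / 2 * (k ^ k * (1 / 4 : ℝ) ^ (-k) * Real.Gamma (-a + k))) ^ 2, by positivity, ?_⟩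
  intro x hx
  have h := hFun_bound (-a) (x ^ 2 / 4) k hk (by linarith) (by positivity)
  have h0 := hFun_nonneg (-a) (x ^ 2 / 4)
  have e : (x ^ 2 / 4) ^ (-k) = (1 / 4 : ℝ) ^ (-k) * x ^ (-(2 * k)) := by
    rw [div_eq_mul_one_div, mul_comm, Real.mul_rpow (by norm_num) (by positivity),
      ← Real.rpow_natCast x 2, ← Real.rpow_mul hx.le]
    congr 2; push_cast; ring
  have e2 : x ^ (p - 4 * k) = x ^ (-(2 * k)) * x ^ (-(2 * k)) * x ^ p := by
    rw [← Real.rpow_add hx, ← Real.rpow_add hx]; congr 1; ring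
  rw [e] at h
  calc _ ≤ (1 / 2 * (k ^ k * ((1 / 4 : ℝ) ^ (-k) * x ^ (-(2 * k))) * Real.Gamma (-a + k))) ^ 2
        * x ^ p := by gcongr
    _ = _ := by rw [e2]; ring

lemma kt_integrable (a p k : ℝ) (hk : 0 < k) (hak : a < k) (hp : 4 * k ≤ p) :
    IntegrableOn (fun x => besselKt a x ^ 2 * x ^ p) (Set.Ioi 0) := by
  have hcongr : IntegrableOn (fun x => (1 / 2 * hFun (-a) (x ^ 2 / 4)) ^ 2 * x ^ p)
      (Set.Ioi 0) := by
    have hcont : ContinuousOn (fun x : ℝ => (1 / 2 * hFun (-a) (x ^ 2 / 4)) ^ 2 * x ^ p)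
        (Set.Ioi 0) := by
      intro x hx
      have hx : 0 < x := hx
      have h1 := (hFun_comp_deriv (-a) x hx).continuousAt
      have h2 : ContinuousAt (fun x : ℝ => x ^ p) x :=
        Real.continuousAt_rpow_const _ _ (Or.inl hx.ne')
      exact (((continuousAt_const.mul h1).pow 2).mul h2).continuousWithinAt
    obtain ⟨C1, hC1, hb1⟩ := kt_bound a k p hk hak
    obtain ⟨C2, hC2, hb2⟩ := kt_bound a (|a| + |p| + 1) p (by positivity)
      (by linarith [le_abs_self a, abs_nonneg p])
    have hnn : ∀ x : ℝ, 0 < x → 0 ≤ (1 / 2 * hFun (-a) (x ^ 2 / 4)) ^ 2 * x ^ p := by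
      intro x hx; positivity
    rw [← Set.Ioc_union_Ioi_eq_Ioi (zero_le_one (α := ℝ)), integrableOn_union]
    constructor
    · refine Integrable.mono' (g := fun _ => C1) (by simp)
        ((hcont.mono Set.Ioc_subset_Ioi_self).aestronglyMeasurable measurableSet_Ioc) ?_
      refine ae_restrict_of_forall_mem measurableSet_Ioc fun x hx => ?_
      rw [Real.norm_of_nonneg (hnn x hx.1)]
      refine (hb1 x hx.1).trans ?_
      have := Real.rpow_le_one hx.1.le hx.2 (show 0 ≤ p - 4 * k by linarith)
      nlinarith
    · have hexp : p - 4 * (|a| + |p| + 1) < -1 := by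
        linarith [le_abs_self p, abs_nonneg p, abs_nonneg a]
      refine Integrable.mono' ((integrableOn_Ioi_rpow_of_lt hexp zero_lt_one).const_mul C2)
        ((hcont.mono (Set.Ioi_subset_Ioi zero_le_one)).aestronglyMeasurable
          measurableSet_Ioi) ?_
      refine ae_restrict_of_forall_mem measurableSet_Ioi fun x hx => ?_
      have hx0 : 0 < x := lt_trans zero_lt_one hx
      rw [Real.norm_of_nonneg (hnn x hx0)]
      exact hb2 x hx0
  refine hcongr.congr_fun (fun x hx => ?_) measurableSet_Ioi
  simp only
  rw [besselKt_eq a x hx]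


/-- The normalized K-Bessel function `K̃_{ν/2}` belongs to `L²(ℝ_+, x^{μ+ν+1}dx)` and is an
eigenfunction of `D_{μ,ν}` with eigenvalue `λ_0^{μ,ν} = 0`. -/
theorem besselKt_eigenfunction (μ ν : ℤ) (hcond : IntCond μ ν) :
    MeasureTheory.IntegrableOn
        (fun x => besselKt ((ν : ℝ) / 2) x ^ 2 * x ^ ((μ : ℝ) + ν + 1)) (Set.Ioi 0)
      ∧ ∀ x > (0 : ℝ), Dop μ ν (besselKt ((ν : ℝ) / 2)) x = 0 := by
  obtain ⟨h1, h2, h3, h4⟩ := hcond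
  refine ⟨?_, fun x hx => Dop_zero μ ν x hx⟩
  rcases eq_or_lt_of_le h1 with h | h
  · subst h
    have hμ : 1 ≤ μ := by
      rcases h3 with ⟨r, hr⟩
      omega
    have hμ' : (1 : ℝ) ≤ μ := by exact_mod_cast hμ
    refine kt_integrable _ _ (1 / 4) (by norm_num) (by push_cast; norm_num) ?_
    push_cast; linarith
  · have hν : (0 : ℝ) ≤ ν := by exact_mod_cast (by omega : (0 : ℤ) ≤ ν)
    have hμ : (ν : ℝ) ≤ μ := by exact_mod_cast h2
    exact kt_integrable _ _ ((ν : ℝ) / 2 + 1 / 4) (by linarith) (by linarith) (by linarith)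
end
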